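/- Let F : ℝ² × ℝ⁹ → ℝ be given by F(x,y,λ) = x⁴ + y⁴ + λ₁ + λ₂x + λ₃y + λ₄x² + λ₅xy + λ₆y² + λ₇x²y + λ₈xy² + λ₉x²y². Then there exists ε₀ > 0 such that for every ε with 0 < ε ≤ ε₀ there exists δ > 0 with the following property: writing Σ = {λ ∈ ℝ⁹ : ‖λ‖ < δ and there exists p ∈ ℝ² with ‖p‖ ≤ ε, F(p,λ) = 0 and the gradient of F(·,λ) vanishes at p}, there exist 7 points of the set {λ ∈ ℝ⁹ : ‖λ‖ < δ} \ Σ lying pairwise in distinct connected components of this set (i.e. the complement of the local discriminant has at least 7 connected components). -/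

import Mathlib

/-!
The components of the complement of the discriminant are told apart by the topology and the shape
of the plane set `{f ≤ 0}`, where `f` is the perturbed function. Seven perturbations are exhibited
for which this set is, respectively, empty, a disc, an annulus, two discs, three discs, four discs
in convex position, and three discs surrounding a fourth one.

They are distinguished by a chain of properties `X9.inv k`: the existence of `n` points in pairwise
different components of `{f ≤ 0}`, or of `{f ≥ 0}` in a large square (which detects the hole of the
annulus), and finally the existence of four points in different components such that the last one
lies inside the triangle of the other three. Each property is locally constant on the set `X9.S` of
parameters with nonsingular zero level (`X9.inv_locally_const`), by two facts about pairs of points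
of the sublevel set:

* being in the same component is an open condition, since near a regular point of the zero level
  all points of the sublevel set can be joined, uniformly in the parameter, to a common hub obtained
  by moving against the gradient (`X9.Family.eventually_J`);
* being in different components is an open condition, since the components of a compact set are its
  quasi-components (`X9.Family.eventually_not_J`).

For the position of four components one also needs that three points in different components are
never collinear (`X9.o_ne_zero`): on the line through them `f` would be a quartic polynomial with
positive leading coefficient and the sign pattern `≤ 0, > 0, ≤ 0, > 0, ≤ 0` at five consecutive
points, contradicting the sign of the fourth divided difference.

Upper bounds for the number of components come from counting critical points, since every component
contains a minimum, or from explicit paths. The quasihomogeneous scaling `X9.sc` moves the examples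
into an arbitrarily small ball without leaving `X9.S`, and for small parameters all zeros of `f` are
close to the origin, so the complement of the local discriminant is contained in `X9.S`.
-/

/-- The standard versal deformation of the `+X₉` singularity `x⁴ + y⁴`. -/
noncomputable def X9plusDef (p : EuclideanSpace ℝ (Fin 2)) (l : EuclideanSpace ℝ (Fin 9)) : ℝ :=
  (p 0) ^ 4 + (p 1) ^ 4 + l 0 + l 1 * p 0 + l 2 * p 1 + l 3 * (p 0) ^ 2 + l 4 * (p 0 * p 1) + l 5 * (p 1) ^ 2
    + l 6 * ((p 0) ^ 2 * p 1) + l 7 * (p 0 * (p 1) ^ 2) + l 8 * ((p 0) ^ 2 * (p 1) ^ 2)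

/-- The local discriminant: parameters `l` with `‖l‖ < δ` such that the corresponding
function has a real critical point `p` with `‖p‖ ≤ ε` and critical value `0`. -/
noncomputable def X9plusDisc (ε δ : ℝ) : Set (EuclideanSpace ℝ (Fin 9)) :=
  {l | ‖l‖ < δ ∧ ∃ p : EuclideanSpace ℝ (Fin 2), ‖p‖ ≤ ε ∧ X9plusDef p l = 0 ∧
    fderiv ℝ (fun q => X9plusDef q l) p = 0}

namespace X9

open Set Filter Topology

/-! ### Components of sublevel sets in families -/

/-- A continuous family, indexed by `Λ`, of continuously differentiable functions on the plane,
together with its partial derivatives and the half-width `R` of the square to which its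
sublevel sets are restricted. The derivative is recorded along straight lines. -/
structure Family (Λ : Type*) [TopologicalSpace Λ] where
  R : ℝ
  G : Λ → ℝ × ℝ → ℝ
  Gx : Λ → ℝ × ℝ → ℝ
  Gy : Λ → ℝ × ℝ → ℝ
  cont : Continuous fun z : Λ × (ℝ × ℝ) => G z.1 z.2
  contx : Continuous fun z : Λ × (ℝ × ℝ) => Gx z.1 z.2
  conty : Continuous fun z : Λ × (ℝ × ℝ) => Gy z.1 z.2
  hasDeriv : ∀ l z d s, HasDerivAt (fun s : ℝ => G l (z + s • d))
    (Gx l (z + s • d) * d.1 + Gy l (z + s • d) * d.2) s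

namespace Family

variable {Λ : Type*} [TopologicalSpace Λ] (Φ : Family Λ)

/-- The square `[-R, R]²`. -/
def box : Set (ℝ × ℝ) := Icc (-Φ.R) Φ.R ×ˢ Icc (-Φ.R) Φ.R

/-- The part of the sublevel set `{G ≤ 0}` inside the square. -/
def X (l : Λ) : Set (ℝ × ℝ) := {p | p ∈ Φ.box ∧ Φ.G l p ≤ 0}

/-- Two points lie in the same connected component of `X l`. -/
def J (l : Λ) (p q : ℝ × ℝ) : Prop := ∃ T ⊆ Φ.X l, IsPreconnected T ∧ p ∈ T ∧ q ∈ T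

/-- The zero level of `G l` in the square is nonsingular and avoids the boundary of the square. -/
def Reg (l : Λ) : Prop := ∀ p ∈ Φ.box, Φ.G l p = 0 →
  p ∈ interior Φ.box ∧ (Φ.Gx l p, Φ.Gy l p) ≠ 0

variable {Φ} {l : Λ} {p q r : ℝ × ℝ}

lemma isCompact_box : IsCompact Φ.box := isCompact_Icc.prod isCompact_Icc

lemma convex_box : Convex ℝ Φ.box := (convex_Icc _ _).prod (convex_Icc _ _)

lemma J.symm (h : Φ.J l p q) : Φ.J l q p := by
  obtain ⟨T, h1, h2, h3, h4⟩ := h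
  exact ⟨T, h1, h2, h4, h3⟩

lemma J.trans (h : Φ.J l p q) (h' : Φ.J l q r) : Φ.J l p r := by
  obtain ⟨T, h1, h2, h3, h4⟩ := h
  obtain ⟨T', h1', h2', h3', h4'⟩ := h'
  exact ⟨T ∪ T', union_subset h1 h1', h2.union q h4 h3' h2', Or.inl h3, Or.inr h4'⟩

lemma J_refl (h : p ∈ Φ.X l) : Φ.J l p p :=
  ⟨{p}, by simpa using h, isPreconnected_singleton, rfl, rfl⟩

lemma J_of_segment (h : ∀ s ∈ Icc (0 : ℝ) 1, p + s • (q - p) ∈ Φ.X l) : Φ.J l p q := by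
  refine ⟨segment ℝ p q, ?_, (convex_segment p q).isPreconnected,
    left_mem_segment ℝ p q, right_mem_segment ℝ p q⟩
  rw [segment_eq_image']
  rintro _ ⟨s, hs, rfl⟩
  exact h s hs

lemma cont_right (l : Λ) : Continuous (Φ.G l) :=
  Φ.cont.comp (Continuous.prodMk_right l)

/-- Near a point `p` with non-zero gradient there is a hub `q₀`, arbitrarily close to `p`, such that
all functions of the family with nearby parameter decrease along every segment from a point
near `p` to `q₀`. -/
lemma exists_hub (hp : p ∈ interior Φ.box) (hv : (Φ.Gx l p, Φ.Gy l p) ≠ 0)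
    {N : Set (ℝ × ℝ)} (hN : N ∈ 𝓝 p) :
    ∃ q₀ ∈ N, q₀ ∈ Φ.box ∧ Φ.G l q₀ < Φ.G l p ∧ ∃ B ∈ 𝓝 p, ∀ᶠ l' in 𝓝 l, ∀ p' ∈ B,
      ∀ s ∈ Icc (0 : ℝ) 1, p' + s • (q₀ - p') ∈ Φ.box ∧
        Φ.G l' (p' + s • (q₀ - p')) ≤ Φ.G l' p' := by
  set v : ℝ × ℝ := (Φ.Gx l p, Φ.Gy l p) with hvdef
  have hc : Continuous fun w : Λ × ((ℝ × ℝ) × (ℝ × ℝ)) =>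
      Φ.Gx w.1 w.2.1 * (-v.1 + w.2.2.1) + Φ.Gy w.1 w.2.1 * (-v.2 + w.2.2.2) := by
    have h1 : Continuous fun w : Λ × ((ℝ × ℝ) × (ℝ × ℝ)) => Φ.Gx w.1 w.2.1 :=
      Φ.contx.comp (continuous_fst.prodMk (continuous_fst.comp continuous_snd))
    have h2 : Continuous fun w : Λ × ((ℝ × ℝ) × (ℝ × ℝ)) => Φ.Gy w.1 w.2.1 :=
      Φ.conty.comp (continuous_fst.prodMk (continuous_fst.comp continuous_snd))
    fun_prop
  have hneg : Φ.Gx l p * (-v.1 + 0) + Φ.Gy l p * (-v.2 + 0) < 0 := by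
    have h0 : v.1 ≠ 0 ∨ v.2 ≠ 0 := by
      by_contra! h
      exact hv (Prod.ext h.1 h.2)
    have e1 : Φ.Gx l p = v.1 := rfl
    have e2 : Φ.Gy l p = v.2 := rfl
    rw [e1, e2]
    rcases h0 with h0 | h0 <;> nlinarith [sq_nonneg v.1, sq_nonneg v.2, sq_pos_of_ne_zero h0]
  have hev : ∀ᶠ w in 𝓝 ((l, (p, 0)) : Λ × ((ℝ × ℝ) × (ℝ × ℝ))),
      Φ.Gx w.1 w.2.1 * (-v.1 + w.2.2.1) + Φ.Gy w.1 w.2.1 * (-v.2 + w.2.2.2) < 0 :=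
    hc.continuousAt.eventually_lt continuousAt_const hneg
  rw [nhds_prod_eq, nhds_prod_eq] at hev
  obtain ⟨W, hW, Q, hQ, hWQ⟩ := eventually_prod_iff.1 hev
  obtain ⟨Z, hZ, U, hU, hZU⟩ := eventually_prod_iff.1 hQ
  obtain ⟨ρ, hρ, hρs⟩ := Metric.eventually_nhds_iff_ball.1
    (hZ.and (inter_mem (isOpen_interior.mem_nhds hp) hN : ∀ᶠ x in 𝓝 p, x ∈ interior Φ.box ∧ x ∈ N))
  obtain ⟨η, hη, hηs⟩ := Metric.eventually_nhds_iff_ball.1 hU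
  obtain ⟨a, ha, haρ⟩ : ∃ a : ℝ, 0 < a ∧ a * ‖v‖ < ρ := by
    refine ⟨ρ / (‖v‖ + 1), by positivity, ?_⟩
    rw [div_mul_eq_mul_div, div_lt_iff₀ (by positivity)]
    nlinarith [norm_nonneg v]
  have hq₀ : p - a • v ∈ Metric.ball p ρ := by
    rw [mem_ball_iff_norm]
    simpa [norm_smul, abs_of_pos ha] using haρ
  have key : ∀ l', W l' → ∀ p' ∈ Metric.ball p (min ρ (a * η)),
      StrictAntiOn (fun s : ℝ => Φ.G l' (p' + s • (p - a • v - p'))) (Icc 0 1) ∧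
      ∀ s ∈ Icc (0 : ℝ) 1, p' + s • (p - a • v - p') ∈ Metric.ball p ρ := by
    intro l' hl' p' hp'
    have hp1 : p' ∈ Metric.ball p ρ := Metric.ball_subset_ball (min_le_left _ _) hp'
    have hin : ∀ s ∈ Icc (0 : ℝ) 1, p' + s • (p - a • v - p') ∈ Metric.ball p ρ := by
      intro s hs
      exact (convex_ball p ρ).add_smul_sub_mem hp1 hq₀ hs
    refine ⟨strictAntiOn_of_deriv_neg (convex_Icc 0 1) ?_ ?_, hin⟩
    · exact fun s _ => (Φ.hasDeriv l' p' _ s).continuousAt.continuousWithinAt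
    · intro s hs
      rw [interior_Icc] at hs
      rw [(Φ.hasDeriv l' p' _ s).deriv]
      set z := p' + s • (p - a • v - p')
      have hz : Z z := (hρs z (hin s ⟨hs.1.le, hs.2.le⟩)).1
      have hu : a⁻¹ • (p - p') ∈ Metric.ball (0 : ℝ × ℝ) η := by
        rw [mem_ball_zero_iff, norm_smul, norm_inv, Real.norm_of_nonneg ha.le,
          inv_mul_lt_iff₀ ha, norm_sub_rev, ← mem_ball_iff_norm]
        exact Metric.ball_subset_ball (min_le_right _ _) hp'
      have := hWQ hl' (hZU hz (hηs _ hu))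
      simp only [Prod.smul_fst, Prod.smul_snd, Prod.fst_sub, Prod.snd_sub, smul_eq_mul] at this ⊢
      have e : Φ.Gx l' z * (p.1 - a * v.1 - p'.1) + Φ.Gy l' z * (p.2 - a * v.2 - p'.2)
          = a * (Φ.Gx l' z * (-v.1 + a⁻¹ * (p.1 - p'.1))
            + Φ.Gy l' z * (-v.2 + a⁻¹ * (p.2 - p'.2))) := by
        field_simp
        ring
      rw [e]
      exact mul_neg_of_pos_of_neg ha this
  have hpb : p ∈ Metric.ball p (min ρ (a * η)) := Metric.mem_ball_self (by positivity)
  refine ⟨p - a • v, (hρs _ hq₀).2.2, interior_subset (hρs _ hq₀).2.1, ?_,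
    Metric.ball p (min ρ (a * η)), Metric.ball_mem_nhds _ (by positivity), ?_⟩
  · have := (key l hW.self_of_nhds p hpb).1 (left_mem_Icc.2 zero_le_one)
      (right_mem_Icc.2 zero_le_one) one_pos
    simpa [sub_eq_add_neg] using this
  · filter_upwards [hW] with l' hl' p' hp' s hs
    obtain ⟨h1, h2⟩ := key l' hl' p' hp'
    refine ⟨interior_subset (hρs _ (h2 s hs)).2.1, ?_⟩
    have := h1.antitoneOn (left_mem_Icc.2 zero_le_one) hs hs.1
    simpa using this

/-- Sublevel sets with regular zero level are locally connected, uniformly in the parameter. -/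
lemma local_J (hl : Φ.Reg l) (hp : p ∈ Φ.X l) :
    ∃ B ∈ 𝓝 p, ∀ᶠ l' in 𝓝 l, ∀ p' ∈ B, ∀ q' ∈ B, p' ∈ Φ.X l' → q' ∈ Φ.X l' → Φ.J l' p' q' := by
  rcases hp.2.lt_or_eq with h | h
  · have hev : ∀ᶠ w in 𝓝 (l, p), Φ.G w.1 w.2 < 0 :=
      Φ.cont.continuousAt.eventually_lt continuousAt_const h
    rw [nhds_prod_eq] at hev
    obtain ⟨W, hW, Q, hQ, hWQ⟩ := eventually_prod_iff.1 hev
    obtain ⟨ρ, hρ, hρs⟩ := Metric.eventually_nhds_iff_ball.1 hQ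
    refine ⟨_, Metric.ball_mem_nhds p hρ, ?_⟩
    filter_upwards [hW] with l' hl' p' hp' q' hq' hpX hqX
    refine J_of_segment fun s hs => ⟨convex_box.add_smul_sub_mem hpX.1 hqX.1 hs, ?_⟩
    exact (hWQ hl' (hρs _ ((convex_ball p ρ).add_smul_sub_mem hp' hq' hs))).le
  · obtain ⟨hi, hv⟩ := hl p hp.1 h
    obtain ⟨q₀, -, -, -, B, hB, hev⟩ := exists_hub hi hv univ_mem
    refine ⟨B, hB, ?_⟩
    filter_upwards [hev] with l' hl' p' hp' q' hq' hpX hqX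
    have h1 : ∀ p' ∈ B, p' ∈ Φ.X l' → Φ.J l' p' q₀ := fun p' hp' hpX =>
      J_of_segment fun s hs => ⟨(hl' p' hp' s hs).1, (hl' p' hp' s hs).2.trans hpX.2⟩
    exact (h1 p' hp' hpX).trans (h1 q' hq' hqX).symm

/-- Lower semicontinuity of the sublevel set in the parameter. -/
lemma lower_semi (hl : Φ.Reg l) (hp : p ∈ Φ.X l) {N : Set (ℝ × ℝ)} (hN : N ∈ 𝓝 p) :
    ∀ᶠ l' in 𝓝 l, ∃ p' ∈ N, p' ∈ Φ.X l' := by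
  have h : ∃ q ∈ N, q ∈ Φ.box ∧ Φ.G l q < 0 := by
    rcases hp.2.lt_or_eq with h | h
    · exact ⟨p, mem_of_mem_nhds hN, hp.1, h⟩
    · obtain ⟨hi, hv⟩ := hl p hp.1 h
      obtain ⟨q₀, h1, h2, h3, -⟩ := exists_hub hi hv hN
      exact ⟨q₀, h1, h2, h ▸ h3⟩
  obtain ⟨q, hq, hqb, hq0⟩ := h
  have hc : Continuous fun l' => Φ.G l' q := Φ.cont.comp (Continuous.prodMk_left q)
  filter_upwards [hc.continuousAt.eventually_lt continuousAt_const hq0] with l' hl'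
  exact ⟨q, hq, hqb, hl'.le⟩

/-- Being in the same component is an open condition at regular parameters. -/
lemma eventually_J (hl : Φ.Reg l) (h : Φ.J l p q) :
    ∀ᶠ w in 𝓝 (l, p, q), w.2.1 ∈ Φ.X w.1 → w.2.2 ∈ Φ.X w.1 → Φ.J w.1 w.2.1 w.2.2 := by
  obtain ⟨T, hTX, hT, hpT, hqT⟩ := h
  suffices H : ∃ N ∈ 𝓝 p, ∃ M ∈ 𝓝 q, ∀ᶠ l' in 𝓝 l, ∀ p' ∈ N, ∀ q' ∈ M,
      p' ∈ Φ.X l' → q' ∈ Φ.X l' → Φ.J l' p' q' by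
    obtain ⟨N, hN, M, hM, hev⟩ := H
    rw [nhds_prod_eq, nhds_prod_eq]
    filter_upwards [hev.prod_mk (Filter.prod_mem_prod hN hM)] with w hw
    exact hw.1 _ hw.2.1 _ hw.2.2
  refine hT.induction₂ (fun p q => ∃ N ∈ 𝓝 p, ∃ M ∈ 𝓝 q, ∀ᶠ l' in 𝓝 l, ∀ p' ∈ N, ∀ q' ∈ M,
      p' ∈ Φ.X l' → q' ∈ Φ.X l' → Φ.J l' p' q') ?_ ?_ ?_ hpT hqT
  · intro x hx
    obtain ⟨B, hB, hev⟩ := local_J hl (hTX hx)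
    filter_upwards [nhdsWithin_le_nhds (eventually_mem_nhds_iff.2 hB)] with y hy
    exact ⟨B, hB, B, hy, hev⟩
  · rintro x y z hx hy hz ⟨N, hN, M, hM, h1⟩ ⟨N', hN', M', hM', h2⟩
    refine ⟨N, hN, M', hM', ?_⟩
    filter_upwards [h1, h2, lower_semi hl (hTX hy) (inter_mem hM hN')] with l' a b c
    obtain ⟨y', hy', hyX⟩ := c
    intro p' hp' q' hq' hpX hqX
    exact (a p' hp' y' hy'.1 hpX hyX).trans (b y' hy'.2 q' hq' hyX hqX)
  · rintro x y hx hy ⟨N, hN, M, hM, h1⟩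
    refine ⟨M, hM, N, hN, ?_⟩
    filter_upwards [h1] with l' a p' hp' q' hq' hpX hqX
    exact (a q' hq' p' hp' hqX hpX).symm

lemma isCompact_X : IsCompact (Φ.X l) :=
  isCompact_box.inter_right (isClosed_le (cont_right l) continuous_const)

/-- Being in different components is an open condition: the components of the compact set `X l`
are its quasi-components, so two of them are separated by open sets covering `X l`,
hence covering `X l'` for nearby `l'`. -/
lemma eventually_not_J (hp : p ∈ Φ.X l) (hq : q ∈ Φ.X l) (h : ¬ Φ.J l p q) :
    ∀ᶠ w in 𝓝 (l, p, q), ¬ Φ.J w.1 w.2.1 w.2.2 := by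
  have : CompactSpace (Φ.X l) := isCompact_iff_compactSpace.1 isCompact_X
  have hnot : (⟨q, hq⟩ : Φ.X l) ∉ connectedComponent (⟨p, hp⟩ : Φ.X l) := by
    intro hmem
    refine h ⟨Subtype.val '' connectedComponent (⟨p, hp⟩ : Φ.X l), ?_, ?_, ?_, ?_⟩
    · rintro _ ⟨x, -, rfl⟩
      exact x.2
    · exact isPreconnected_connectedComponent.image _ continuous_subtype_val.continuousOn
    · exact ⟨_, mem_connectedComponent, rfl⟩
    · exact ⟨_, hmem, rfl⟩
  rw [connectedComponent_eq_iInter_isClopen, mem_iInter] at hnot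
  push Not at hnot
  obtain ⟨⟨Z, hZ, hpZ⟩, hqZ⟩ := hnot
  have hA : IsCompact (Subtype.val '' Z : Set (ℝ × ℝ)) :=
    hZ.isClosed.isCompact.image continuous_subtype_val
  have hA' : IsCompact (Subtype.val '' Zᶜ : Set (ℝ × ℝ)) :=
    hZ.compl.isClosed.isCompact.image continuous_subtype_val
  have hdisj : Disjoint (Subtype.val '' Z : Set (ℝ × ℝ)) (Subtype.val '' Zᶜ) :=
    (disjoint_image_iff Subtype.val_injective).2 disjoint_compl_right
  obtain ⟨U, U', hU, hU', hAU, hAU', hUU⟩ := SeparatedNhds.of_isCompact_isCompact hA hA' hdisj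
  have hpU : p ∈ U := hAU ⟨_, hpZ, rfl⟩
  have hqU : q ∈ U' := hAU' ⟨_, hqZ, rfl⟩
  have hcov : ∀ᶠ l' in 𝓝 l, ∀ z ∈ Φ.box \ (U ∪ U'), 0 < Φ.G l' z := by
    refine (isCompact_box.diff (hU.union hU')).eventually_forall_of_forall_eventually ?_
    intro z hz
    refine continuousAt_const.eventually_lt Φ.cont.continuousAt ?_
    by_contra! hle
    refine hz.2 ?_
    by_cases hzZ : (⟨z, hz.1, hle⟩ : Φ.X l) ∈ Z
    · exact Or.inl (hAU ⟨_, hzZ, rfl⟩)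
    · exact Or.inr (hAU' ⟨_, hzZ, rfl⟩)
  rw [nhds_prod_eq, nhds_prod_eq]
  filter_upwards [hcov.prod_mk (Filter.prod_mem_prod (hU.mem_nhds hpU) (hU'.mem_nhds hqU))]
    with w hw
  rintro ⟨T, hTX, hT, h1, h2⟩
  have hTU : T ⊆ U ∪ U' := by
    intro z hz
    by_contra hzU
    exact absurd (hTX hz).2 (not_le.2 (hw.1 z ⟨(hTX hz).1, hzU⟩))
  obtain ⟨z, -, hz, hz'⟩ := hT U U' hU hU' hTU ⟨_, h1, hw.2.1⟩ ⟨_, h2, hw.2.2⟩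
  exact hUU.le_bot ⟨hz, hz'⟩

variable (Φ) in
/-- Configurations of `n` points lying in pairwise distinct components of `X l`. -/
def Conf (n : ℕ) (l : Λ) : Set (Fin n → ℝ × ℝ) :=
  {p | (∀ i, p i ∈ Φ.X l) ∧ ∀ i j, i ≠ j → ¬ Φ.J l (p i) (p j)}

/-- A condition on `Conf n l` which is both open and closed on the configurations
is realised for a set of parameters that is relatively clopen among the regular ones. -/
lemma locally_const {n : ℕ} {S : Set Λ} (hS : ∀ l ∈ S, Φ.Reg l) {C C' : Set (Fin n → ℝ × ℝ)}
    (hC : IsOpen C) (hC' : IsClosed C') (hCC : ∀ l ∈ S, ∀ p ∈ Φ.Conf n l, p ∈ C ↔ p ∈ C')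
    (hl : l ∈ S) :
    ∀ᶠ l' in 𝓝[S] l, ((∃ p ∈ Φ.Conf n l', p ∈ C) ↔ ∃ p ∈ Φ.Conf n l, p ∈ C) := by
  by_cases h : ∃ p ∈ Φ.Conf n l, p ∈ C
  · simp only [h, iff_true]
    obtain ⟨p, hp, hpC⟩ := h
    refine nhdsWithin_le_nhds ?_
    have h1 : ∀ᶠ w in 𝓝 (l, p), w.2 ∈ C ∧ ∀ i j, i ≠ j → ¬ Φ.J w.1 (w.2 i) (w.2 j) := by
      refine (continuous_snd.continuousAt.eventually (hC.mem_nhds hpC)).and ?_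
      simp only [eventually_all]
      intro i j hij
      have hc : Continuous fun w : Λ × (Fin n → ℝ × ℝ) => (w.1, w.2 i, w.2 j) := by fun_prop
      exact hc.continuousAt.eventually (eventually_not_J (hp.1 i) (hp.1 j) (hp.2 i j hij))
    rw [nhds_prod_eq] at h1
    obtain ⟨W, hW, Q, hQ, hWQ⟩ := eventually_prod_iff.1 h1
    rw [nhds_pi, Filter.Eventually, Filter.mem_pi'] at hQ
    obtain ⟨I, N, hN, hNQ⟩ := hQ
    have h2 : ∀ᶠ l' in 𝓝 l, ∀ i, ∃ p' ∈ N i, p' ∈ Φ.X l' :=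
      eventually_all.2 fun i => lower_semi (hS l hl) (hp.1 i) (hN i)
    filter_upwards [hW, h2] with l' hl' h3
    choose p' hp' hpX using h3
    have := hWQ hl' (hNQ (show p' ∈ Set.pi I N from fun i _ => hp' i))
    exact ⟨p', ⟨hpX, this.2⟩, this.1⟩
  · simp only [h, iff_false]
    have hK : IsCompact (Set.pi univ fun _ : Fin n => Φ.box) :=
      isCompact_univ_pi fun _ => isCompact_box
    have : ∀ᶠ l' in 𝓝 l, ∀ p ∈ Set.pi univ fun _ : Fin n => Φ.box,
        ¬ (p ∈ Φ.Conf n l' ∧ p ∈ C') := by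
      refine hK.eventually_forall_of_forall_eventually fun p hp => ?_
      by_cases hX : ∀ i, p i ∈ Φ.X l
      · by_cases hJ : ∀ i j, i ≠ j → ¬ Φ.J l (p i) (p j)
        · have hpC : p ∉ C' := fun hpC => h ⟨p, ⟨hX, hJ⟩, (hCC l hl p ⟨hX, hJ⟩).2 hpC⟩
          filter_upwards [continuous_snd.continuousAt.eventually (hC'.isOpen_compl.mem_nhds hpC)]
            with w hw hw'
          exact hw hw'.2
        · push Not at hJ
          obtain ⟨i, j, hij, hJ⟩ := hJ
          have hc : Continuous fun w : Λ × (Fin n → ℝ × ℝ) => (w.1, w.2 i, w.2 j) := by fun_prop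
          filter_upwards [hc.continuousAt.eventually (eventually_J (hS l hl) hJ)] with w hw hw'
          exact hw'.1.2 i j hij (hw (hw'.1.1 i) (hw'.1.1 j))
      · push Not at hX
        obtain ⟨i, hi⟩ := hX
        have hG : 0 < Φ.G l (p i) := by
          by_contra! hle
          exact hi ⟨hp i (mem_univ i), hle⟩
        have hc : Continuous fun w : Λ × (Fin n → ℝ × ℝ) => Φ.G w.1 (w.2 i) :=
          Φ.cont.comp (continuous_fst.prodMk ((continuous_apply i).comp continuous_snd))
        filter_upwards [continuousAt_const.eventually_lt hc.continuousAt hG] with w hw hw'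
        exact absurd (hw'.1.1 i).2 (not_le.2 hw)
    filter_upwards [nhdsWithin_le_nhds this, self_mem_nhdsWithin] with l' hl' hlS
    rintro ⟨p, hp, hpC⟩
    exact hl' p (fun i _ => (hp.1 i).1) ⟨hp, (hCC l' hlS p hp).1 hpC⟩

/-- If the sublevel set stays away from the boundary of the square, each of its components
contains a critical point, namely a minimum point. -/
lemma exists_crit (hsub : Φ.X l ⊆ interior Φ.box) (hp : p ∈ Φ.X l) :
    ∃ c ∈ Φ.X l, Φ.J l p c ∧ Φ.Gx l c = 0 ∧ Φ.Gy l c = 0 := by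
  have hcl : IsClosed {q | q ∈ Φ.X l ∧ Φ.J l p q} := by
    rw [← isOpen_compl_iff, isOpen_iff_mem_nhds]
    intro q hq
    by_cases hqX : q ∈ Φ.X l
    · have hJ : ¬ Φ.J l p q := fun hJ => hq ⟨hqX, hJ⟩
      have hc : Continuous fun q' : ℝ × ℝ => (l, p, q') := by fun_prop
      filter_upwards [hc.continuousAt.eventually (eventually_not_J hp hqX hJ)] with q' h h'
      exact h h'.2
    · filter_upwards [isCompact_X.isClosed.isOpen_compl.mem_nhds hqX] with q' h h'
      exact h h'.1
  have hK : IsCompact {q | q ∈ Φ.X l ∧ Φ.J l p q} :=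
    isCompact_X.of_isClosed_subset hcl fun q hq => hq.1
  obtain ⟨c, ⟨hcX, hcJ⟩, hmin⟩ := hK.exists_isMinOn ⟨p, hp, J_refl hp⟩ (cont_right l).continuousOn
  refine ⟨c, hcX, hcJ, ?_⟩
  by_contra hne
  have hv : (Φ.Gx l c, Φ.Gy l c) ≠ 0 := fun h => hne ⟨congrArg Prod.fst h, congrArg Prod.snd h⟩
  obtain ⟨q₀, -, hq₀, hlt, B, hB, hev⟩ := exists_hub (hsub hcX) hv univ_mem
  have hs := hev.self_of_nhds c (mem_of_mem_nhds hB)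
  have hJ : Φ.J l c q₀ := J_of_segment fun s h => ⟨(hs s h).1, (hs s h).2.trans hcX.2⟩
  exact absurd (hmin (show q₀ ∈ {q | q ∈ Φ.X l ∧ Φ.J l p q} from
    ⟨⟨hq₀, hlt.le.trans hcX.2⟩, hcJ.trans hJ⟩)) (not_le.2 hlt)

end Family

/-! ### The deformation as a family -/

/-- The parameter space of the deformation. -/
abbrev Par := EuclideanSpace ℝ (Fin 9)

/-- The deformation, with the plane modelled as `ℝ × ℝ`. -/
def f (l : Par) (p : ℝ × ℝ) : ℝ :=
  p.1 ^ 4 + p.2 ^ 4 + l 0 + l 1 * p.1 + l 2 * p.2 + l 3 * p.1 ^ 2 + l 4 * (p.1 * p.2)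
    + l 5 * p.2 ^ 2 + l 6 * (p.1 ^ 2 * p.2) + l 7 * (p.1 * p.2 ^ 2) + l 8 * (p.1 ^ 2 * p.2 ^ 2)

/-- The partial derivative of `f l` in the first variable. -/
def fx (l : Par) (p : ℝ × ℝ) : ℝ :=
  4 * p.1 ^ 3 + l 1 + 2 * l 3 * p.1 + l 4 * p.2 + 2 * l 6 * (p.1 * p.2) + l 7 * p.2 ^ 2
    + 2 * l 8 * (p.1 * p.2 ^ 2)

/-- The partial derivative of `f l` in the second variable. -/
def fy (l : Par) (p : ℝ × ℝ) : ℝ :=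
  4 * p.2 ^ 3 + l 2 + l 4 * p.1 + 2 * l 5 * p.2 + l 6 * p.1 ^ 2 + 2 * l 7 * (p.1 * p.2)
    + 2 * l 8 * (p.1 ^ 2 * p.2)

lemma f_hasDeriv (l : Par) (z d : ℝ × ℝ) (s : ℝ) : HasDerivAt (fun s : ℝ => f l (z + s • d))
    (fx l (z + s • d) * d.1 + fy l (z + s • d) * d.2) s := by
  have hx : HasDerivAt (fun s : ℝ => (z + s • d).1) d.1 s := by
    simpa using ((hasDerivAt_id s).mul_const d.1).const_add z.1
  have hy : HasDerivAt (fun s : ℝ => (z + s • d).2) d.2 s := by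
    simpa using ((hasDerivAt_id s).mul_const d.2).const_add z.2
  have := ((((((((((hx.pow 4).add (hy.pow 4)).add_const (l 0)).add (hx.const_mul (l 1))).add
    (hy.const_mul (l 2))).add ((hx.pow 2).const_mul (l 3))).add
    ((hx.mul hy).const_mul (l 4))).add ((hy.pow 2).const_mul (l 5))).add
    (((hx.pow 2).mul hy).const_mul (l 6))).add ((hx.mul (hy.pow 2)).const_mul (l 7))).add
    (((hx.pow 2).mul (hy.pow 2)).const_mul (l 8))
  refine this.congr_deriv ?_
  simp only [fx, fy, Pi.pow_apply]
  push_cast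
  ring

lemma f_cont : Continuous fun z : Par × (ℝ × ℝ) => f z.1 z.2 := by
  unfold f
  fun_prop

lemma fx_cont : Continuous fun z : Par × (ℝ × ℝ) => fx z.1 z.2 := by
  unfold fx
  fun_prop

lemma fy_cont : Continuous fun z : Par × (ℝ × ℝ) => fy z.1 z.2 := by
  unfold fy
  fun_prop

/-- The family whose sublevel sets are `{f ≤ 0}`. -/
def Fam : Family Par where
  R := 30
  G := f
  Gx := fx
  Gy := fy
  cont := f_cont
  contx := fx_cont
  conty := fy_cont
  hasDeriv := f_hasDeriv

/-- The family whose sublevel sets are `{f ≥ 0}`. -/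
def FamNeg : Family Par where
  R := 30
  G := fun l p => -f l p
  Gx := fun l p => -fx l p
  Gy := fun l p => -fy l p
  cont := f_cont.neg
  contx := fx_cont.neg
  conty := fy_cont.neg
  hasDeriv := fun l z d s => (f_hasDeriv l z d s).neg.congr_deriv (by ring)

/-- Lower bound for `f` in terms of bounds on the parameters. -/
lemma f_lower {l : Par} {d e m x y : ℝ} (hd : ∀ i, |l i| ≤ d) (he : |l 8| ≤ e)
    (hx : |x| ≤ m) (hy : |y| ≤ m) :
    (1 - e / 2) * (x ^ 4 + y ^ 4) - d * (1 + 2 * m + 3 * m ^ 2 + 2 * m ^ 3) ≤ f l (x, y) := by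
  have hm : 0 ≤ m := (abs_nonneg x).trans hx
  have hd0 : 0 ≤ d := (abs_nonneg _).trans (hd 0)
  have key : ∀ i (t M : ℝ), |t| ≤ M → -(d * M) ≤ l i * t := by
    intro i t M ht
    have : |l i * t| ≤ d * M := by
      rw [abs_mul]
      exact mul_le_mul (hd i) ht (abs_nonneg _) hd0
    exact (abs_le.1 this).1
  have hx2 : |x ^ 2| ≤ m ^ 2 := by rw [abs_pow]; gcongr
  have hy2 : |y ^ 2| ≤ m ^ 2 := by rw [abs_pow]; gcongr
  have hxy : |x * y| ≤ m ^ 2 := by rw [abs_mul, pow_two]; gcongr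
  have hxxy : |x ^ 2 * y| ≤ m ^ 3 := by
    rw [abs_mul, show m ^ 3 = m ^ 2 * m by ring]; gcongr
  have hxyy : |x * y ^ 2| ≤ m ^ 3 := by
    rw [abs_mul, show m ^ 3 = m * m ^ 2 by ring]; gcongr
  have h8 : -(e * ((x ^ 4 + y ^ 4) / 2)) ≤ l 8 * (x ^ 2 * y ^ 2) := by
    have h1 : x ^ 2 * y ^ 2 ≤ (x ^ 4 + y ^ 4) / 2 := by nlinarith [sq_nonneg (x ^ 2 - y ^ 2)]
    have h2 : 0 ≤ x ^ 2 * y ^ 2 := by positivity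
    nlinarith [(abs_le.1 he).1, (abs_nonneg _).trans he]
  have k0 := key 0 1 1 (by simp)
  have k1 := key 1 x m hx
  have k2 := key 2 y m hy
  have k3 := key 3 _ _ hx2
  have k4 := key 4 _ _ hxy
  have k5 := key 5 _ _ hy2
  have k6 := key 6 _ _ hxxy
  have k7 := key 7 _ _ hxyy
  simp only [f]
  linarith

/-- The sum of fourth powers dominates the fourth power of the sup norm. -/
lemma max_pow_le (x y : ℝ) : (max |x| |y|) ^ 4 ≤ x ^ 4 + y ^ 4 := by
  have h : ∀ t : ℝ, |t| ^ 4 = t ^ 4 := fun t => Even.pow_abs (by decide) t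
  rcases max_choice |x| |y| with h1 | h1 <;> rw [h1, h] <;> nlinarith [sq_nonneg (x ^ 2), sq_nonneg (y ^ 2)]

/-- Parameters in a fixed bounded region for which the zero level of `f` is nonsingular. The bounds
ensure that this zero level lies inside the square `(-30, 30)²`. -/
def S : Set Par := {l | (∀ i, |l i| < 5) ∧ |l 8| < 1 ∧ ∀ p, f l p = 0 → (fx l p, fy l p) ≠ 0}

lemma f_pos_of_far {l : Par} (hl : l ∈ S) {p : ℝ × ℝ} (hp : 30 ≤ max |p.1| |p.2|) :
    0 < f l p := by
  have h := f_lower (l := l) (d := 5) (e := 1) (x := p.1) (y := p.2) (fun i => (hl.1 i).le)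
    hl.2.1.le (le_max_left _ _) (le_max_right _ _)
  have h2 := max_pow_le p.1 p.2
  set m := max |p.1| |p.2|
  have h3 : 0 < 1 / 2 * m ^ 4 - 5 * (1 + 2 * m + 3 * m ^ 2 + 2 * m ^ 3) := by
    obtain ⟨t, ht, hm⟩ : ∃ t, 0 ≤ t ∧ m = 30 + t := ⟨m - 30, by linarith, by ring⟩
    rw [hm]
    ring_nf
    positivity
  have h' : f l p = f l (p.1, p.2) := rfl
  rw [h']
  linarith

lemma mem_interior_box {p : ℝ × ℝ} (h : max |p.1| |p.2| < 30) : p ∈ interior Fam.box := by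
  obtain ⟨h1, h2⟩ := max_lt_iff.1 h
  rw [Family.box, interior_prod_eq, interior_Icc]
  exact ⟨abs_lt.1 h1, abs_lt.1 h2⟩

lemma X_subset_interior {l : Par} (hl : l ∈ S) : Fam.X l ⊆ interior Fam.box := by
  intro p hp
  refine mem_interior_box ?_
  by_contra! h
  exact absurd hp.2 (not_le.2 (f_pos_of_far hl h))

lemma Fam_reg : ∀ l ∈ S, Fam.Reg l := fun _ hl p hp h =>
  ⟨X_subset_interior hl ⟨hp, h.le⟩, hl.2.2 p h⟩

lemma FamNeg_reg : ∀ l ∈ S, FamNeg.Reg l := by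
  intro l hl p hp h
  have h0 : f l p = 0 := neg_eq_zero.1 h
  refine ⟨(Fam_reg l hl p hp h0).1, fun h1 => hl.2.2 p h0 ?_⟩
  exact Prod.ext (neg_eq_zero.1 (congrArg Prod.fst h1)) (neg_eq_zero.1 (congrArg Prod.snd h1))

/-! ### Components of quartic sublevel sets and lines -/

/-- A quartic with positive leading coefficient cannot have the sign pattern `≤ 0`, `> 0`, `≤ 0`,
`> 0`, `≤ 0` at five increasing points: its fourth divided difference would be negative. -/
lemma quartic_sign {a b c d e s t u : ℝ} (ha : 0 < a) (hs : 0 < s) (hst : s < t) (htu : t < u)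
    (hu : u < 1) {g : ℝ → ℝ} (hg : ∀ x, g x = a * x ^ 4 + b * x ^ 3 + c * x ^ 2 + d * x + e)
    (h0 : g 0 ≤ 0) (h1 : 0 < g s) (h2 : g t ≤ 0) (h3 : 0 < g u) (h4 : g 1 ≤ 0) : False := by
  have hts : 0 < t - s := by linarith
  have hut : 0 < u - t := by linarith
  have hus : 0 < u - s := by linarith
  have h1u : 0 < 1 - u := by linarith
  have h1t : 0 < 1 - t := by linarith
  have h1s : 0 < 1 - s := by linarith
  have ht : 0 < t := by linarith
  have hu0 : 0 < u := by linarith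
  have key : a = g 0 / (s * t * u) - g s / (s * (t - s) * (u - s) * (1 - s))
      + g t / (t * (t - s) * (u - t) * (1 - t)) - g u / (u * (u - s) * (u - t) * (1 - u))
      + g 1 / ((1 - s) * (1 - t) * (1 - u)) := by
    simp only [hg]
    field_simp
    ring
  have k0 : g 0 / (s * t * u) ≤ 0 := div_nonpos_of_nonpos_of_nonneg h0 (by positivity)
  have k1 : 0 < g s / (s * (t - s) * (u - s) * (1 - s)) := by positivity
  have k2 : g t / (t * (t - s) * (u - t) * (1 - t)) ≤ 0 :=
    div_nonpos_of_nonpos_of_nonneg h2 (by positivity)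
  have k3 : 0 < g u / (u * (u - s) * (u - t) * (1 - u)) := by positivity
  have k4 : g 1 / ((1 - s) * (1 - t) * (1 - u)) ≤ 0 :=
    div_nonpos_of_nonpos_of_nonneg h4 (by positivity)
  linarith

/-- If two points of `X l` are not joined, `f` is positive somewhere between them. -/
lemma exists_pos_between {l : Par} {p q : ℝ × ℝ} (hp : p ∈ Fam.X l) (hq : q ∈ Fam.X l)
    (h : ¬ Fam.J l p q) : ∃ s : ℝ, 0 < s ∧ s < 1 ∧ 0 < f l (p + s • (q - p)) := by
  by_contra! hcon
  refine h (Family.J_of_segment fun s hs =>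
    ⟨Family.convex_box.add_smul_sub_mem hp.1 hq.1 hs, ?_⟩)
  change f l _ ≤ 0
  rcases hs.1.eq_or_lt with h0 | h0
  · subst h0
    simpa using (show f l _ ≤ 0 from hp.2)
  rcases hs.2.eq_or_lt with h1 | h1
  · subst h1
    simpa using (show f l _ ≤ 0 from hq.2)
  exact hcon s h0 h1

/-- A point of `X l` on the open segment between two others is joined to one of them. -/
lemma no_middle {l : Par} (hl : l ∈ S) {p r : ℝ × ℝ} {t : ℝ} (ht0 : 0 < t) (ht1 : t < 1)
    (hp : p ∈ Fam.X l) (hq : p + t • (r - p) ∈ Fam.X l) (hr : r ∈ Fam.X l)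
    (hpq : ¬ Fam.J l p (p + t • (r - p))) (hqr : ¬ Fam.J l (p + t • (r - p)) r) : False := by
  obtain ⟨s, hs0, hs1, hs⟩ := exists_pos_between hp hq hpq
  obtain ⟨u, hu0, hu1, hu⟩ := exists_pos_between hq hr hqr
  have e1 : p + s • (p + t • (r - p) - p) = p + (s * t) • (r - p) := by
    ext <;> simp <;> ring
  have e2 : p + t • (r - p) + u • (r - (p + t • (r - p)))
      = p + (t + u * (1 - t)) • (r - p) := by
    ext <;> simp <;> ring
  rw [e1] at hs
  rw [e2] at hu
  obtain ⟨x, y⟩ := p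
  obtain ⟨z, w⟩ := r
  have hne : z - x ≠ 0 ∨ w - y ≠ 0 := by
    by_contra! h
    refine hpq ?_
    have : ((x, y) : ℝ × ℝ) + t • ((z, w) - (x, y)) = (x, y) := by
      ext <;> simp [h.1, h.2]
    rw [this]
    exact Family.J_refl hp
  have ha : 0 < (z - x) ^ 4 + (w - y) ^ 4 + l 8 * ((z - x) ^ 2 * (w - y) ^ 2) := by
    have h8 := (abs_lt.1 hl.2.1).1
    have hpos : 0 < (z - x) ^ 4 + (w - y) ^ 4 := by
      rcases hne with h | h <;> positivity
    have h1 : 0 ≤ (z - x) ^ 2 * (w - y) ^ 2 := by positivity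
    nlinarith [sq_nonneg ((z - x) ^ 2 - (w - y) ^ 2)]
  refine quartic_sign (g := fun s => f l ((x, y) + s • ((z, w) - (x, y)))) (s := s * t) (t := t)
    (u := t + u * (1 - t)) (a := (z - x) ^ 4 + (w - y) ^ 4 + l 8 * ((z - x) ^ 2 * (w - y) ^ 2))
    (b := 4 * x * (z - x) ^ 3 + 4 * y * (w - y) ^ 3 + l 6 * ((z - x) ^ 2 * (w - y))
      + l 7 * ((z - x) * (w - y) ^ 2)
      + l 8 * (2 * x * (z - x) * (w - y) ^ 2 + 2 * y * (w - y) * (z - x) ^ 2))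
    (c := 6 * x ^ 2 * (z - x) ^ 2 + 6 * y ^ 2 * (w - y) ^ 2 + l 3 * (z - x) ^ 2
      + l 4 * ((z - x) * (w - y)) + l 5 * (w - y) ^ 2
      + l 6 * ((z - x) ^ 2 * y + 2 * x * (z - x) * (w - y))
      + l 7 * ((w - y) ^ 2 * x + 2 * y * (w - y) * (z - x))
      + l 8 * (x ^ 2 * (w - y) ^ 2 + y ^ 2 * (z - x) ^ 2 + 4 * x * (z - x) * y * (w - y)))
    (d := fx l (x, y) * (z - x) + fy l (x, y) * (w - y)) (e := f l (x, y)) ha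
    (by positivity) (by nlinarith) (by nlinarith) (by nlinarith) ?_ ?_ hs ?_ hu ?_
  · intro s
    simp only [f, fx, fy, Prod.fst_add, Prod.snd_add, Prod.smul_fst, Prod.smul_snd, Prod.fst_sub,
      Prod.snd_sub, smul_eq_mul]
    ring
  · simpa using (show f l _ ≤ 0 from hp.2)
  · exact hq.2
  · simpa using (show f l _ ≤ 0 from hr.2)

/-- Twice the signed area of the triangle `p q r`. -/
def o (p q r : ℝ × ℝ) : ℝ := (q.1 - p.1) * (r.2 - p.2) - (q.2 - p.2) * (r.1 - p.1)

/-- Three points in distinct components of `{f ≤ 0}` are never collinear. -/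
lemma o_ne_zero {l : Par} (hl : l ∈ S) {p q r : ℝ × ℝ}
    (hp : p ∈ Fam.X l) (hq : q ∈ Fam.X l) (hr : r ∈ Fam.X l)
    (hpq : ¬ Fam.J l p q) (hqr : ¬ Fam.J l q r) (hpr : ¬ Fam.J l p r) : o p q r ≠ 0 := by
  intro h
  obtain ⟨t, rfl⟩ : ∃ t : ℝ, r = p + t • (q - p) := by
    unfold o at h
    by_cases h1 : q.1 - p.1 = 0
    · have h2 : q.2 - p.2 ≠ 0 := by
        intro h2
        have : p = q := Prod.ext (by linarith) (by linarith)
        exact hpq (this ▸ Family.J_refl hp)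
      refine ⟨(r.2 - p.2) / (q.2 - p.2), Prod.ext ?_ ?_⟩
      · simp only [Prod.fst_add, Prod.smul_fst, Prod.fst_sub, smul_eq_mul]
        rw [h1, zero_mul, zero_sub, neg_eq_zero] at h
        have := (mul_eq_zero.1 h).resolve_left h2
        rw [h1]
        linarith
      · simp only [Prod.snd_add, Prod.smul_snd, Prod.snd_sub, smul_eq_mul]
        field_simp
        ring
    · refine ⟨(r.1 - p.1) / (q.1 - p.1), Prod.ext ?_ ?_⟩
      · simp only [Prod.fst_add, Prod.smul_fst, Prod.fst_sub, smul_eq_mul]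
        field_simp
        ring
      · simp only [Prod.snd_add, Prod.smul_snd, Prod.snd_sub, smul_eq_mul]
        field_simp
        linarith
  rcases lt_trichotomy t 0 with h0 | h0 | h0
  · -- `p` lies between `r` and `q`
    have e : p + t • (q - p) + (t / (t - 1)) • (q - (p + t • (q - p))) = p := by
      have : t - 1 ≠ 0 := by linarith
      ext <;> simp <;> field_simp <;> ring
    refine no_middle hl (p := p + t • (q - p)) (r := q) (t := t / (t - 1))
      (div_pos_of_neg_of_neg h0 (by linarith)) ?_ hr (by rwa [e]) hq ?_ (by rwa [e])
    · rw [div_lt_one_of_neg (by linarith)]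
      linarith
    · rw [e]
      exact fun h => hpr h.symm
  · subst h0
    refine hpr ?_
    simpa using Family.J_refl hp
  rcases lt_trichotomy t 1 with h1 | h1 | h1
  · exact no_middle hl h0 h1 hp hr hq hpr fun h => hqr h.symm
  · subst h1
    refine hqr ?_
    simpa using Family.J_refl hq
  · -- `q` lies between `p` and `r`
    have e : p + t⁻¹ • (p + t • (q - p) - p) = q := by
      have : t ≠ 0 := h0.ne'
      ext <;> simp [this]
    exact no_middle hl (p := p) (r := p + t • (q - p)) (t := t⁻¹) (by positivity)
      (inv_lt_one_of_one_lt₀ h1) hp (by rwa [e]) hr (by rwa [e]) (by rwa [e])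

/-- The last of four points lies inside the positively oriented triangle formed by the others. -/
def Inside : Set (Fin 4 → ℝ × ℝ) :=
  {p | 0 < o (p 0) (p 1) (p 3) ∧ 0 < o (p 1) (p 2) (p 3) ∧ 0 < o (p 2) (p 0) (p 3)}

/-! ### The chain of invariants -/

/-- The invariant of level `k`. Levels `1, 3, 4, 5` say that `{f ≤ 0}` has at least `1, 2, 3, 4`
components. Level `2` also admits sets with one component and a hole, and level `6` asks for
four components in non-convex position. -/
def inv : ℕ → Par → Prop
  | 0, _ => True
  | 1, l => (Fam.Conf 1 l).Nonempty
  | 2, l => ((FamNeg.Conf 2 l).Nonempty ∧ (Fam.Conf 1 l).Nonempty) ∨ (Fam.Conf 2 l).Nonempty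
  | 3, l => (Fam.Conf 2 l).Nonempty
  | 4, l => (Fam.Conf 3 l).Nonempty
  | 5, l => (Fam.Conf 4 l).Nonempty
  | _, l => ∃ p ∈ Fam.Conf 4 l, p ∈ Inside

lemma conf_mono {n : ℕ} {l : Par} (h : (Fam.Conf (n + 1) l).Nonempty) :
    (Fam.Conf n l).Nonempty := by
  obtain ⟨p, hp, hp'⟩ := h
  exact ⟨fun i => p i.castSucc, fun i => hp _, fun i j hij =>
    hp' _ _ fun h => hij (Fin.castSucc_injective n h)⟩

lemma inv_succ {k : ℕ} {l : Par} (h : inv (k + 1) l) : inv k l := by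
  match k, h with
  | 0, _ => trivial
  | 1, h => exact h.elim (fun h => h.2) conf_mono
  | 2, h => exact Or.inr h
  | 3, h => exact conf_mono h
  | 4, h => exact conf_mono h
  | 5, ⟨p, hp, _⟩ => exact ⟨p, hp⟩
  | _ + 6, h => exact h

lemma inv_anti {j k : ℕ} (hjk : j ≤ k) {l : Par} (h : inv k l) : inv j l := by
  induction hjk with
  | refl => exact h
  | step _ ih => exact ih (inv_succ h)

lemma conf_locally_const {Φ : Family Par} (hΦ : ∀ l ∈ S, Φ.Reg l) (n : ℕ) {l : Par} (hl : l ∈ S) :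
    ∀ᶠ l' in 𝓝[S] l, ((Φ.Conf n l').Nonempty ↔ (Φ.Conf n l).Nonempty) := by
  have := Family.locally_const (n := n) hΦ isOpen_univ isClosed_univ (fun _ _ _ _ => Iff.rfl) hl
  simpa [Set.Nonempty] using this

/-- For the last level, the strict and the weak form of `Inside` agree on configurations since no
three of the points are collinear. -/
lemma inv_locally_const (k : ℕ) {l : Par} (hl : l ∈ S) :
    ∀ᶠ l' in 𝓝[S] l, (inv k l' ↔ inv k l) := by
  match k with
  | 0 => exact Eventually.of_forall fun _ => Iff.rfl
  | 1 => exact conf_locally_const Fam_reg 1 hl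
  | 2 =>
    filter_upwards [conf_locally_const Fam_reg 1 hl, conf_locally_const Fam_reg 2 hl,
      conf_locally_const FamNeg_reg 2 hl] with l' h1 h2 h3
    simp only [inv, h1, h2, h3]
  | 3 => exact conf_locally_const Fam_reg 2 hl
  | 4 => exact conf_locally_const Fam_reg 3 hl
  | 5 => exact conf_locally_const Fam_reg 4 hl
  | _ + 6 =>
    refine Family.locally_const Fam_reg (C := Inside) (C' := {p | 0 ≤ o (p 0) (p 1) (p 3) ∧
      0 ≤ o (p 1) (p 2) (p 3) ∧ 0 ≤ o (p 2) (p 0) (p 3)}) ?_ ?_ ?_ hl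
    · simp only [Inside, o, ofPred_and]
      refine IsOpen.inter ?_ (IsOpen.inter ?_ ?_) <;>
        exact isOpen_lt continuous_const (by fun_prop)
    · simp only [o, ofPred_and]
      refine IsClosed.inter ?_ (IsClosed.inter ?_ ?_) <;>
        exact isClosed_le continuous_const (by fun_prop)
    · rintro l hl p ⟨hp, hp'⟩
      have key : ∀ i j k : Fin 4, i ≠ j → j ≠ k → i ≠ k → o (p i) (p j) (p k) ≠ 0 :=
        fun i j k h1 h2 h3 => o_ne_zero hl (hp i) (hp j) (hp k) (hp' i j h1) (hp' j k h2)
          (hp' i k h3)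
      refine ⟨fun h => ⟨h.1.le, h.2.1.le, h.2.2.le⟩, fun h => ⟨?_, ?_, ?_⟩⟩
      · exact lt_of_le_of_ne h.1 (key 0 1 3 (by decide) (by decide) (by decide)).symm
      · exact lt_of_le_of_ne h.2.1 (key 1 2 3 (by decide) (by decide) (by decide)).symm
      · exact lt_of_le_of_ne h.2.2 (key 2 0 3 (by decide) (by decide) (by decide)).symm

lemma inv_const (k : ℕ) {T : Set Par} (hT : IsPreconnected T) (hTS : T ⊆ S) {l l' : Par}
    (hl : l ∈ T) (hl' : l' ∈ T) : inv k l ↔ inv k l' := by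
  refine hT.induction₂ (fun a b => inv k a ↔ inv k b) ?_ ?_ ?_ hl hl'
  · intro a ha
    filter_upwards [nhdsWithin_mono a hTS (inv_locally_const k (hTS ha))] with b hb
    exact hb.symm
  · intro a b c _ _ _ h1 h2
    exact h1.trans h2
  · intro a b _ _ h
    exact h.symm

/-! ### The seven examples -/

/-- Seven parameters whose sublevel sets `{f ≤ 0}` are, in this order: empty, a disc, an annulus, two
discs, three discs, four discs in convex position, three discs surrounding a fourth. -/
noncomputable def E : Fin 7 → Par :=
  ![!₂[1, 0, 0, 0, 0, 0, 0, 0, 0],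
    !₂[-1, 0, 0, 0, 0, 0, 0, 0, 0],
    !₂[1 / 2, 0, 0, -2, 0, -2, 0, 0, 0],
    !₂[1 / 2, 0, 0, -2, 0, 0, 0, 0, 0],
    !₂[1 / 20, 0, 0, 0, 0, 0, 4, 4, 0],
    !₂[3 / 2, 0, 0, -2, 0, -2, 0, 0, 0],
    !₂[1 / 16 - 1 / 50, 0, 0, -1 / 2, 0, 5 / 2, 0, 4, 0]]

lemma f_E0 (x y : ℝ) : f (E 0) (x, y) = x ^ 4 + y ^ 4 + 1 := by
  simp [f, E]

lemma f_E1 (x y : ℝ) : f (E 1) (x, y) = x ^ 4 + y ^ 4 - 1 := by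
  simp [f, E]
  ring

lemma f_E2 (x y : ℝ) : f (E 2) (x, y) = (x ^ 2 - 1) ^ 2 + (y ^ 2 - 1) ^ 2 - 3 / 2 := by
  simp [f, E]
  ring

lemma f_E3 (x y : ℝ) : f (E 3) (x, y) = (x ^ 2 - 1) ^ 2 + y ^ 4 - 1 / 2 := by
  simp [f, E]
  ring

lemma f_E4 (x y : ℝ) : f (E 4) (x, y) = x ^ 4 + y ^ 4 + 4 * (x * y * (x + y)) + 1 / 20 := by
  simp [f, E]
  ring

lemma f_E5 (x y : ℝ) : f (E 5) (x, y) = (x ^ 2 - 1) ^ 2 + (y ^ 2 - 1) ^ 2 - 1 / 2 := by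
  simp [f, E]
  ring

lemma f_E6 (x y : ℝ) : f (E 6) (x, y) =
    (x ^ 2 - 1 / 4 - y ^ 2) ^ 2 + 2 * (y * (x + 1)) ^ 2 - 1 / 50 := by
  simp [f, E]
  ring

lemma fx_E0 (x y : ℝ) : fx (E 0) (x, y) = 4 * x ^ 3 := by simp [fx, E]
lemma fx_E1 (x y : ℝ) : fx (E 1) (x, y) = 4 * x ^ 3 := by simp [fx, E]
lemma fx_E2 (x y : ℝ) : fx (E 2) (x, y) = 4 * (x * (x ^ 2 - 1)) := by simp [fx, E]; ring
lemma fx_E3 (x y : ℝ) : fx (E 3) (x, y) = 4 * (x * (x ^ 2 - 1)) := by simp [fx, E]; ring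
lemma fx_E4 (x y : ℝ) : fx (E 4) (x, y) = 4 * (x ^ 3 + 2 * x * y + y ^ 2) := by
  simp [fx, E]; ring
lemma fx_E5 (x y : ℝ) : fx (E 5) (x, y) = 4 * (x * (x ^ 2 - 1)) := by simp [fx, E]; ring
lemma fx_E6 (x y : ℝ) : fx (E 6) (x, y) = 4 * x ^ 3 - x + 4 * y ^ 2 := by simp [fx, E]; ring

lemma fy_E0 (x y : ℝ) : fy (E 0) (x, y) = 4 * y ^ 3 := by simp [fy, E]
lemma fy_E1 (x y : ℝ) : fy (E 1) (x, y) = 4 * y ^ 3 := by simp [fy, E]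
lemma fy_E2 (x y : ℝ) : fy (E 2) (x, y) = 4 * (y * (y ^ 2 - 1)) := by simp [fy, E]; ring
lemma fy_E3 (x y : ℝ) : fy (E 3) (x, y) = 4 * y ^ 3 := by simp [fy, E]
lemma fy_E4 (x y : ℝ) : fy (E 4) (x, y) = 4 * (y ^ 3 + x ^ 2 + 2 * x * y) := by
  simp [fy, E]; ring
lemma fy_E5 (x y : ℝ) : fy (E 5) (x, y) = 4 * (y * (y ^ 2 - 1)) := by simp [fy, E]; ring
lemma fy_E6 (x y : ℝ) : fy (E 6) (x, y) = y * (4 * y ^ 2 + 5 + 8 * x) := by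
  simp [fy, E]; ring

lemma E_bound (j : Fin 7) : (∀ i, |E j i| < 5) ∧ |E j 8| < 1 := by
  refine ⟨fun i => ?_, ?_⟩
  · fin_cases j <;> fin_cases i <;> simp [E] <;> norm_num [abs_lt]
  · fin_cases j <;> simp [E]

lemma crit_double_well {x : ℝ} (h : 4 * (x * (x ^ 2 - 1)) = 0) :
    (x ^ 2 - 1) ^ 2 = 0 ∨ (x ^ 2 - 1) ^ 2 = 1 := by
  have h' : x * (x ^ 2 - 1) = 0 := by linarith
  rcases mul_eq_zero.1 h' with h | h
  · right; rw [h]; norm_num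
  · left; rw [h]; norm_num

/-- The critical points with nonpositive value of the three-disc example: one on the diagonal, and
a pair symmetric about it, described by the sum and the product of the coordinates. -/
lemma crit_E4 {x y : ℝ} (h1 : fx (E 4) (x, y) = 0) (h2 : fy (E 4) (x, y) = 0)
    (h0 : f (E 4) (x, y) ≤ 0) :
    (x = -3 ∧ y = -3) ∨ (x ≠ y ∧ x + y = (3 - √5) / 2 ∧ x * y = 2 * (x + y) - 1) := by
  rw [fx_E4] at h1
  rw [fy_E4] at h2
  rw [f_E4] at h0
  have hx : x ^ 3 + 2 * x * y + y ^ 2 = 0 := by linarith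
  have hy : y ^ 3 + x ^ 2 + 2 * x * y = 0 := by linarith
  have hdiff : (x - y) * ((x + y) ^ 2 - x * y - (x + y)) = 0 := by linear_combination hx - hy
  rcases eq_or_ne x y with rfl | hne
  · left
    have : x ^ 2 * (x + 3) = 0 := by linear_combination hx
    rcases mul_eq_zero.1 this with h | h
    · have : x = 0 := by simpa using h
      subst this
      norm_num at h0
    · exact ⟨by linarith, by linarith⟩
  · right
    have hp : x * y = (x + y) ^ 2 - (x + y) := by
      have := (mul_eq_zero.1 hdiff).resolve_left (sub_ne_zero.2 hne)
      linarith
    have hs : (x + y) * ((x + y) ^ 2 - 3 * (x + y) + 1) = 0 := by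
      linear_combination (-1 / 2) * hx - (1 / 2) * hy + (1 - 3 / 2 * (x + y)) * hp
    have hD : 0 < (x + y) ^ 2 - 4 * (x * y) := by
      have : 0 < (x - y) ^ 2 := by
        have := sub_ne_zero.2 hne
        positivity
      nlinarith
    rcases mul_eq_zero.1 hs with h | h
    · rw [h] at hp hD
      rw [hp] at hD
      norm_num at hD
    · have hp' : x * y = 2 * (x + y) - 1 := by linarith
      refine ⟨hne, ?_, hp'⟩
      have h5 : √5 ^ 2 = 5 := Real.sq_sqrt (by norm_num)
      have hlt : x + y < 3 / 5 := by nlinarith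
      have hfac : (x + y - (3 - √5) / 2) * (x + y - (3 + √5) / 2) = 0 := by
        linear_combination h - h5 / 4
      rcases mul_eq_zero.1 hfac with h' | h'
      · linarith
      · have := Real.sqrt_nonneg 5
        linarith

lemma E_mem_S (j : Fin 7) : E j ∈ S := by
  refine ⟨(E_bound j).1, (E_bound j).2, ?_⟩
  rintro ⟨x, y⟩ h0 h
  have h1 : fx (E j) (x, y) = 0 := congrArg Prod.fst h
  have h2 : fy (E j) (x, y) = 0 := congrArg Prod.snd h
  clear h
  match j with
  | 0 =>
    rw [f_E0] at h0
    nlinarith [sq_nonneg (x ^ 2), sq_nonneg (y ^ 2)]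
  | 1 =>
    rw [fx_E1] at h1
    rw [fy_E1] at h2
    rw [f_E1] at h0
    have hx : x = 0 := by simpa using h1
    have hy : y = 0 := by simpa using h2
    norm_num [hx, hy] at h0
  | 2 =>
    rw [fx_E2] at h1
    rw [fy_E2] at h2
    rw [f_E2] at h0
    rcases crit_double_well h1 with h | h <;> rcases crit_double_well h2 with h' | h' <;>
      rw [h, h'] at h0 <;> norm_num at h0
  | 3 =>
    rw [fx_E3] at h1
    rw [fy_E3] at h2
    rw [f_E3] at h0
    have hy : y = 0 := by simpa using h2
    rcases crit_double_well h1 with h | h <;> rw [h, hy] at h0 <;> norm_num at h0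
  | 4 =>
    rcases crit_E4 h1 h2 h0.le with ⟨rfl, rfl⟩ | ⟨-, hs, hp⟩
    · rw [f_E4] at h0
      norm_num at h0
    · rw [f_E4] at h0
      rw [fx_E4] at h1
      rw [fy_E4] at h2
      -- Euler's relation gives `f = xy(x + y) + 1/20` at a critical point.
      have h3 : x * y * (x + y) = -1 / 20 := by linear_combination h0 - x / 4 * h1 - y / 4 * h2
      rw [hp, hs] at h3
      have h5 : √5 ^ 2 = 5 := Real.sq_sqrt (by norm_num)
      nlinarith
  | 5 =>
    rw [fx_E5] at h1
    rw [fy_E5] at h2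
    rw [f_E5] at h0
    rcases crit_double_well h1 with h | h <;> rcases crit_double_well h2 with h' | h' <;>
      rw [h, h'] at h0 <;> norm_num at h0
  | 6 =>
    rw [fx_E6] at h1
    rw [fy_E6] at h2
    rw [f_E6] at h0
    rcases mul_eq_zero.1 h2 with rfl | h
    · have : x * ((2 * x - 1) * (2 * x + 1)) = 0 := by linear_combination h1
      rcases mul_eq_zero.1 this with rfl | h
      · norm_num at h0
      rcases mul_eq_zero.1 h with h | h
      · have : x = 1 / 2 := by linarith
        subst this
        norm_num at h0
      · have : x = -1 / 2 := by linarith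
        subst this
        norm_num at h0
    · have hy : y ^ 2 = -(5 + 8 * x) / 4 := by linarith
      have hx : (x + 1) * (4 * x ^ 2 - 4 * x - 5) = 0 := by linear_combination h1 - 4 * hy
      have h3 : (x ^ 2 - 1 / 4 + (5 + 8 * x) / 4) ^ 2 - (5 + 8 * x) / 2 * (x + 1) ^ 2
          - 1 / 50 = 0 := by
        rw [mul_pow, hy] at h0
        linear_combination h0
      have h4 : 0 ≤ -(5 + 8 * x) / 4 := hy ▸ sq_nonneg y
      rcases mul_eq_zero.1 hx with h | h
      · have : x = -1 := by linarith
        subst this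
        norm_num at h3
      · nlinarith

lemma sign_const {T : Set (ℝ × ℝ)} (hT : IsPreconnected T) {φ : ℝ × ℝ → ℝ} (hφ : Continuous φ)
    (h : ∀ z ∈ T, φ z ≠ 0) {p q : ℝ × ℝ} (hp : p ∈ T) (hq : q ∈ T) (h0 : 0 < φ p) : 0 < φ q := by
  by_contra! hle
  obtain ⟨z, hz, hz0⟩ := hT.intermediate_value hq hp hφ.continuousOn ⟨hle, h0.le⟩
  exact h z hz hz0

/-- Points of `X l` on different sides of a curve disjoint from `X l` are not joined. -/
lemma not_J_of_sign {Φ : Family Par} {l : Par} {φ : ℝ × ℝ → ℝ} (hφ : Continuous φ)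
    (h : ∀ z ∈ Φ.X l, φ z ≠ 0) {p q : ℝ × ℝ} (hp : 0 < φ p) (hq : φ q < 0) : ¬ Φ.J l p q := by
  rintro ⟨T, hTX, hT, hpT, hqT⟩
  exact absurd (sign_const hT hφ (fun z hz => h z (hTX hz)) hpT hqT hp) (not_lt.2 hq.le)

/-- To check that the entries of a finite list are pairwise not joined it suffices to treat the pairs
in increasing order. -/
lemma pairwise_not_J {Φ : Family Par} {l : Par} {n : ℕ} {p : Fin n → ℝ × ℝ}
    (h : ∀ i j, i < j → ¬ Φ.J l (p i) (p j)) (i j : Fin n) (hij : i ≠ j) :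
    ¬ Φ.J l (p i) (p j) := by
  rcases lt_or_gt_of_ne hij with h1 | h1
  · exact h i j h1
  · exact fun hJ => h j i h1 hJ.symm

lemma mem_X {l : Par} {x y : ℝ} (hx : |x| ≤ 30) (hy : |y| ≤ 30) (h : f l (x, y) ≤ 0) :
    (x, y) ∈ Fam.X l :=
  ⟨⟨abs_le.1 hx, abs_le.1 hy⟩, h⟩

lemma mem_XNeg {l : Par} {x y : ℝ} (hx : |x| ≤ 30) (hy : |y| ≤ 30) (h : 0 ≤ f l (x, y)) :
    (x, y) ∈ FamNeg.X l :=
  ⟨⟨abs_le.1 hx, abs_le.1 hy⟩, neg_nonpos.2 h⟩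

/-- If `κ` separates the critical points with nonpositive value into `n` classes of at most one
element, then `{f ≤ 0}` has at most `n` components. -/
lemma conf_empty_of_crit {l : Par} (hl : l ∈ S) {n : ℕ} (κ : ℝ × ℝ → Fin n)
    (h : ∀ c c' : ℝ × ℝ, f l c ≤ 0 → f l c' ≤ 0 → fx l c = 0 → fy l c = 0 → fx l c' = 0 →
      fy l c' = 0 → κ c = κ c' → c = c') : ¬ (Fam.Conf (n + 1) l).Nonempty := by
  rintro ⟨p, hp, hp'⟩
  choose c hcX hcJ hc1 hc2 using fun i => Family.exists_crit (X_subset_interior hl) (hp i)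
  obtain ⟨i, j, hij, hκ⟩ := Fintype.exists_ne_map_eq_of_card_lt (fun i => κ (c i)) (by simp)
  have : c i = c j := h _ _ (hcX i).2 (hcX j).2 (hc1 i) (hc2 i) (hc1 j) (hc2 j) hκ
  exact hp' i j hij ((hcJ i).trans (this ▸ (hcJ j).symm))

/-! ### The values of the invariants on the seven examples -/

lemma inv_E0 : ¬ inv 1 (E 0) := by
  rintro ⟨p, hp, -⟩
  have h : f (E 0) ((p 0).1, (p 0).2) ≤ 0 := (hp 0).2
  rw [f_E0] at h
  nlinarith [sq_nonneg ((p 0).1 ^ 2), sq_nonneg ((p 0).2 ^ 2)]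

lemma inv_E1 : inv 1 (E 1) := by
  refine ⟨fun _ => (0, 0), fun _ => mem_X (by norm_num) (by norm_num) ?_,
    fun i j hij => absurd (Subsingleton.elim i j) hij⟩
  rw [f_E1]
  norm_num

/-- Moving a point of the complement of the disc away from the coordinate axes keeps it outside
the disc, so the complement of the disc in the square is connected. -/
lemma J_E1 {p : ℝ × ℝ} (hp : p ∈ FamNeg.X (E 1)) : FamNeg.J (E 1) p (30, 30) := by
  obtain ⟨x, y⟩ := p
  have h0 : 0 ≤ f (E 1) (x, y) := neg_nonpos.1 hp.2
  rw [f_E1] at h0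
  have hx : |x| ≤ 30 := abs_le.2 hp.1.1
  have hy : |y| ≤ 30 := abs_le.2 hp.1.2
  have habs : ∀ u v s : ℝ, |u| ≤ 30 → |v| ≤ 30 → s ∈ Icc (0 : ℝ) 1 → |u + s * (v - u)| ≤ 30 := by
    intro u v s hu hv hs
    rw [abs_le] at *
    constructor <;> nlinarith [hs.1, hs.2]
  have hbig : ∀ u v : ℝ, |u| ≤ 30 → 0 ≤ u ^ 4 + v ^ 4 - 1 ∨ u ^ 2 = 900 ∨ v ^ 2 = 900 →
      0 ≤ u ^ 4 + v ^ 4 - 1 := by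
    rintro u v - (h | h | h)
    · exact h
    · nlinarith [sq_nonneg (v ^ 2)]
    · nlinarith [sq_nonneg (u ^ 2)]
  obtain ⟨a, ha, hax⟩ : ∃ a : ℝ, a ^ 2 = 900 ∧ 0 ≤ a * x ∧ |a| ≤ 30 := by
    rcases le_total 0 x with h | h
    · exact ⟨30, by norm_num, by linarith, by norm_num⟩
    · exact ⟨-30, by norm_num, by linarith, by norm_num⟩
  have step1 : FamNeg.J (E 1) (x, y) (a, y) := by
    refine Family.J_of_segment fun s hs => ?_
    have e : ((x, y) : ℝ × ℝ) + s • ((a, y) - (x, y)) = (x + s * (a - x), y) := by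
      ext <;> simp
    rw [e]
    refine mem_XNeg (habs _ _ _ hx hax.2 hs) hy ?_
    rw [f_E1]
    have h2 : x ^ 2 ≤ (x + s * (a - x)) ^ 2 := by
      have h30 : x ^ 2 ≤ 900 := by nlinarith [abs_le.1 hx]
      have e2 : (x + s * (a - x)) ^ 2 - x ^ 2
          = s ^ 2 * (a ^ 2 - x ^ 2) + 2 * (s * (1 - s)) * (a * x - x ^ 2) := by ring
      have h3 : x ^ 2 ≤ a * x := by
        have : (x ^ 2) ^ 2 ≤ (a * x) ^ 2 := by rw [mul_pow, ha]; nlinarith [sq_nonneg x]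
        exact le_of_sq_le_sq this hax.1
      have h4 : 0 ≤ s * (1 - s) := mul_nonneg hs.1 (by linarith [hs.2])
      have h5 : 0 ≤ s ^ 2 * (a ^ 2 - x ^ 2) := mul_nonneg (sq_nonneg s) (by linarith)
      have h6 : 0 ≤ s * (1 - s) * (a * x - x ^ 2) := mul_nonneg h4 (by linarith)
      linarith
    nlinarith [sq_nonneg x]
  have step2 : FamNeg.J (E 1) (a, y) (a, 30) := by
    refine Family.J_of_segment fun s hs => ?_
    have e : ((a, y) : ℝ × ℝ) + s • ((a, 30) - (a, y)) = (a, y + s * (30 - y)) := by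
      ext <;> simp
    rw [e]
    refine mem_XNeg hax.2 (habs _ _ _ hy (by norm_num) hs) ?_
    rw [f_E1]
    exact hbig _ _ hax.2 (Or.inr (Or.inl ha))
  have step3 : FamNeg.J (E 1) (a, 30) (30, 30) := by
    refine Family.J_of_segment fun s hs => ?_
    have e : ((a, 30) : ℝ × ℝ) + s • ((30, 30) - (a, 30)) = (a + s * (30 - a), 30) := by
      ext <;> simp
    rw [e]
    refine mem_XNeg (habs _ _ _ hax.2 (by norm_num) hs) (by norm_num) ?_
    rw [f_E1]
    exact hbig _ _ (habs _ _ _ hax.2 (by norm_num) hs) (Or.inr (Or.inr (by norm_num)))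
  exact (step1.trans step2).trans step3

lemma inv_E1' : ¬ inv 2 (E 1) := by
  rintro (⟨⟨p, hp, hp'⟩, -⟩ | h)
  · exact hp' 0 1 (by decide) ((J_E1 (hp 0)).trans (J_E1 (hp 1)).symm)
  · refine conf_empty_of_crit (E_mem_S 1) (n := 1) (fun _ => 0) ?_ h
    rintro ⟨x, y⟩ ⟨z, w⟩ - - h1 h2 h3 h4 -
    rw [fx_E1] at h1 h3
    rw [fy_E1] at h2 h4
    simp_all

/-- Moving a coordinate linearly towards the nearest bottom of a double well decreases the
height. -/
lemma double_well {x σ s : ℝ} (hσ : σ ^ 2 = 1) (hx : 0 ≤ σ * x) (hs : s ∈ Icc (0 : ℝ) 1) :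
    ((x + s * (σ - x)) ^ 2 - 1) ^ 2 ≤ (x ^ 2 - 1) ^ 2 := by
  obtain ⟨u, hu, rfl⟩ : ∃ u, 0 ≤ u ∧ x = σ * u :=
    ⟨σ * x, hx, by rw [← mul_assoc, ← pow_two, hσ, one_mul]⟩
  have e1 : (σ * u + s * (σ - σ * u)) ^ 2 - 1
      = (u - 1) * ((1 - s ^ 2) + u * (1 - s) ^ 2) := by
    linear_combination (u + s * (1 - u)) ^ 2 * hσ
  have e2 : (σ * u) ^ 2 - 1 = (u - 1) * (1 + u) := by linear_combination u ^ 2 * hσ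
  rw [e1, e2, mul_pow, mul_pow]
  have h1 : 0 ≤ (1 - s ^ 2) + u * (1 - s) ^ 2 := by
    have : 0 ≤ 1 - s ^ 2 := by nlinarith [hs.1, hs.2]
    positivity
  have h2 : (1 - s ^ 2) + u * (1 - s) ^ 2 ≤ 1 + u := by
    have : (1 - s) ^ 2 ≤ 1 := by nlinarith [hs.1, hs.2]
    nlinarith [sq_nonneg s]
  gcongr

/-- In a sum of two double wells each point is joined to the bottom in its quadrant. -/
lemma J_well {l : Par} {k : ℝ} (hf : ∀ x y, f l (x, y) = (x ^ 2 - 1) ^ 2 + (y ^ 2 - 1) ^ 2 - k)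
    {x y σ τ : ℝ} (hp : (x, y) ∈ Fam.X l) (hσ : σ ^ 2 = 1) (hx : 0 ≤ σ * x) (hτ : τ ^ 2 = 1)
    (hy : 0 ≤ τ * y) : Fam.J l (x, y) (σ, τ) := by
  have hbox : ((σ, τ) : ℝ × ℝ) ∈ Fam.box := by
    have h30 : ∀ t : ℝ, t ^ 2 = 1 → -30 ≤ t ∧ t ≤ 30 := fun t ht => by
      constructor <;> nlinarith
    exact ⟨h30 σ hσ, h30 τ hτ⟩
  refine Family.J_of_segment fun s hs =>
    ⟨Family.convex_box.add_smul_sub_mem hp.1 hbox hs, ?_⟩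
  have e : ((x, y) : ℝ × ℝ) + s • ((σ, τ) - (x, y)) = (x + s * (σ - x), y + s * (τ - y)) := rfl
  have h0 : f l (x, y) ≤ 0 := hp.2
  change f l _ ≤ 0
  rw [e, hf]
  rw [hf] at h0
  linarith [double_well hσ hx hs, double_well hτ hy hs]

lemma exists_sign (x : ℝ) : ∃ σ : ℝ, (σ = 1 ∨ σ = -1) ∧ σ ^ 2 = 1 ∧ 0 ≤ σ * x := by
  rcases le_total 0 x with h | h
  · exact ⟨1, Or.inl rfl, by norm_num, by linarith⟩
  · exact ⟨-1, Or.inr rfl, by norm_num, by linarith⟩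

lemma inv_E2 : inv 2 (E 2) := by
  refine Or.inl ⟨⟨![(30, 30), (0, 0)], ?_, pairwise_not_J ?_⟩, ⟨fun _ => (1, 1),
    fun _ => mem_X (by norm_num) (by norm_num) ?_,
    fun i j hij => absurd (Subsingleton.elim i j) hij⟩⟩
  · intro i
    fin_cases i <;> refine mem_XNeg (by norm_num) (by norm_num) ?_ <;> rw [f_E2] <;> norm_num
  · have key : ¬ FamNeg.J (E 2) (30, 30) (0, 0) := by
      refine not_J_of_sign (φ := fun z => z.1 ^ 2 + z.2 ^ 2 - 1) (by fun_prop) ?_ (by norm_num)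
        (by norm_num)
      rintro ⟨x, y⟩ hz h
      have h0 : 0 ≤ f (E 2) (x, y) := neg_nonpos.1 hz.2
      rw [f_E2] at h0
      simp only at h
      have h2 : y ^ 2 = 1 - x ^ 2 := by linarith
      have h3 : 0 ≤ x ^ 2 * y ^ 2 := by positivity
      rw [h2] at h0 h3
      nlinarith
    intro i j hij
    fin_cases i <;> fin_cases j <;> first | exact key | exact absurd hij (by decide)
  · rw [f_E2]
    norm_num

lemma J_E2 {p : ℝ × ℝ} (hp : p ∈ Fam.X (E 2)) : Fam.J (E 2) p (1, 1) := by
  obtain ⟨x, y⟩ := p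
  obtain ⟨σ, hσ, hσ2, hx⟩ := exists_sign x
  obtain ⟨τ, hτ, hτ2, hy⟩ := exists_sign y
  have hmem : ∀ u v : ℝ, -1 ≤ u → u ≤ 1 → -1 ≤ v → v ≤ 1 → u ^ 2 = 1 ∨ v ^ 2 = 1 →
      (u, v) ∈ Fam.X (E 2) := by
    intro u v h1 h2 h3 h4 h
    refine mem_X (abs_le.2 ⟨by linarith, by linarith⟩) (abs_le.2 ⟨by linarith, by linarith⟩) ?_
    rw [f_E2]
    have hu : u ^ 2 ≤ 1 := by nlinarith
    have hv : v ^ 2 ≤ 1 := by nlinarith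
    rcases h with h | h <;> rw [h] <;> nlinarith [sq_nonneg u, sq_nonneg v]
  have h1 : Fam.J (E 2) (x, y) (σ, τ) := J_well f_E2 hp hσ2 hx hτ2 hy
  have h2 : Fam.J (E 2) (σ, τ) (1, τ) := by
    refine Family.J_of_segment fun s hs => ?_
    have e : ((σ, τ) : ℝ × ℝ) + s • ((1, τ) - (σ, τ)) = (σ + s * (1 - σ), τ) := by
      ext <;> simp
    rw [e]
    obtain ⟨hs0, hs1⟩ := hs
    refine hmem _ _ ?_ ?_ ?_ ?_ (Or.inr hτ2) <;> rcases hσ with rfl | rfl <;>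
      rcases hτ with rfl | rfl <;> linarith
  have h3 : Fam.J (E 2) (1, τ) (1, 1) := by
    refine Family.J_of_segment fun s hs => ?_
    have e : ((1, τ) : ℝ × ℝ) + s • ((1, 1) - (1, τ)) = (1, τ + s * (1 - τ)) := by
      ext <;> simp
    rw [e]
    obtain ⟨hs0, hs1⟩ := hs
    refine hmem _ _ ?_ ?_ ?_ ?_ (Or.inl (by norm_num)) <;>
      rcases hτ with rfl | rfl <;> linarith
  exact (h1.trans h2).trans h3

lemma inv_E2' : ¬ inv 3 (E 2) := by
  rintro ⟨p, hp, hp'⟩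
  exact hp' 0 1 (by decide) ((J_E2 (hp 0)).trans (J_E2 (hp 1)).symm)

lemma inv_E3 : inv 3 (E 3) := by
  refine ⟨![(1, 0), (-1, 0)], ?_, pairwise_not_J ?_⟩
  · intro i
    fin_cases i <;> refine mem_X (by norm_num) (by norm_num) ?_ <;> rw [f_E3] <;> norm_num
  · have key : ¬ Fam.J (E 3) (1, 0) (-1, 0) := by
      refine not_J_of_sign (φ := fun z => z.1) (by fun_prop) ?_ (by norm_num) (by norm_num)
      rintro ⟨x, y⟩ hz h
      have h0 : f (E 3) (x, y) ≤ 0 := hz.2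
      rw [f_E3] at h0
      simp only at h
      subst h
      nlinarith [sq_nonneg (y ^ 2)]
    intro i j hij
    fin_cases i <;> fin_cases j <;> first | exact key | exact absurd hij (by decide)

/-- The only critical points with nonpositive value are `(1, 0)` and `(-1, 0)`. -/
lemma inv_E3' : ¬ inv 4 (E 3) := by
  have crit : ∀ x y : ℝ, f (E 3) (x, y) ≤ 0 → fx (E 3) (x, y) = 0 → fy (E 3) (x, y) = 0 →
      (x = 1 ∨ x = -1) ∧ y = 0 := by
    intro x y h0 h1 h2
    rw [f_E3] at h0
    rw [fx_E3] at h1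
    rw [fy_E3] at h2
    have hy : y = 0 := by simpa using h2
    have h1' : x * (x ^ 2 - 1) = 0 := by linarith
    refine ⟨?_, hy⟩
    rcases mul_eq_zero.1 h1' with h | h
    · rw [h, hy] at h0
      norm_num at h0
    · have h3 : (x - 1) * (x + 1) = 0 := by linarith
      rcases mul_eq_zero.1 h3 with h4 | h4
      · exact Or.inl (by linarith)
      · exact Or.inr (by linarith)
  refine conf_empty_of_crit (E_mem_S 3) (n := 2) (fun z => if 0 < z.1 then 0 else 1) ?_
  rintro ⟨x, y⟩ ⟨z, w⟩ h0 h0' h1 h2 h3 h4 h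
  obtain ⟨ha, rfl⟩ := crit x y h0 h1 h2
  obtain ⟨hb, rfl⟩ := crit z w h0' h3 h4
  rcases ha with rfl | rfl <;> rcases hb with rfl | rfl <;> first | rfl | norm_num at h

lemma inv_E4 : inv 4 (E 4) := by
  have hneg : ∀ z ∈ Fam.X (E 4), z.1 * z.2 * (z.1 + z.2) < 0 := by
    rintro ⟨x, y⟩ hz
    have h0 : f (E 4) (x, y) ≤ 0 := hz.2
    rw [f_E4] at h0
    simp only
    nlinarith [sq_nonneg (x ^ 2), sq_nonneg (y ^ 2)]
  have hx : ∀ z ∈ Fam.X (E 4), z.1 ≠ 0 := fun z hz h => by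
    have := hneg z hz
    simp [h] at this
  have hy : ∀ z ∈ Fam.X (E 4), z.2 ≠ 0 := fun z hz h => by
    have := hneg z hz
    simp [h] at this
  refine ⟨![(2 / 3, -1 / 3), (-1 / 3, 2 / 3), (-1, -1)], ?_, pairwise_not_J ?_⟩
  · intro i
    fin_cases i <;> refine mem_X ?_ ?_ ?_ <;> first | rw [f_E4]; norm_num | norm_num [abs_le]
  · have k01 : ¬ Fam.J (E 4) (2 / 3, -1 / 3) (-1 / 3, 2 / 3) :=
      not_J_of_sign (φ := fun z => z.1) (by fun_prop) hx (by norm_num) (by norm_num)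
    have k02 : ¬ Fam.J (E 4) (2 / 3, -1 / 3) (-1, -1) :=
      not_J_of_sign (φ := fun z => z.1) (by fun_prop) hx (by norm_num) (by norm_num)
    have k12 : ¬ Fam.J (E 4) (-1 / 3, 2 / 3) (-1, -1) :=
      not_J_of_sign (φ := fun z => z.2) (by fun_prop) hy (by norm_num) (by norm_num)
    intro i j hij
    fin_cases i <;> fin_cases j <;>
      first | exact k01 | exact k02 | exact k12 | exact absurd hij (by decide)

/-- There are three critical points with nonpositive value: one on the diagonal and one on each
side of it. -/
lemma inv_E4' : ¬ inv 5 (E 4) := by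
  refine conf_empty_of_crit (E_mem_S 4) (n := 3)
    (fun z => if z.1 = z.2 then 0 else if z.1 < z.2 then 1 else 2) ?_
  rintro ⟨x, y⟩ ⟨z, w⟩ h0 h0' h1 h2 h3 h4 h
  simp only at h
  rcases crit_E4 h1 h2 h0 with ⟨rfl, rfl⟩ | ⟨hne, hs, hp⟩ <;>
    rcases crit_E4 h3 h4 h0' with ⟨rfl, rfl⟩ | ⟨hne', hs', hp'⟩
  · rfl
  · rw [if_pos rfl, if_neg hne'] at h
    split_ifs at h <;> exact absurd h (by decide)
  · rw [if_pos rfl, if_neg hne] at h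
    split_ifs at h <;> exact absurd h (by decide)
  · rw [if_neg hne, if_neg hne'] at h
    -- Both points have the same sum and product of coordinates, hence the same `(x - y)²`.
    have hsum : x + y = z + w := hs.trans hs'.symm
    have hprod : x * y = z * w := by rw [hp, hp', hsum]
    have hsq : (x - z) * (x - w) = 0 := by linear_combination x * hsum - hprod
    rcases mul_eq_zero.1 hsq with hz | hz
    · exact Prod.ext (by simp only; linarith) (by simp only; linarith)
    · exfalso
      have e1 : x = w := by linarith
      have e2 : y = z := by linarith
      subst e1 e2
      split_ifs at h with c1 c2
      · linarith
      · exact absurd h (by decide)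
      · exact absurd h (by decide)
      · exact hne (le_antisymm (not_lt.1 (by assumption)) (not_lt.1 (by assumption)))

lemma inv_E5 : inv 5 (E 5) := by
  have hx : ∀ z ∈ Fam.X (E 5), z.1 ≠ 0 := by
    rintro ⟨x, y⟩ hz h
    have h0 : f (E 5) (x, y) ≤ 0 := hz.2
    rw [f_E5] at h0
    simp only at h
    subst h
    nlinarith [sq_nonneg (y ^ 2 - 1)]
  have hy : ∀ z ∈ Fam.X (E 5), z.2 ≠ 0 := by
    rintro ⟨x, y⟩ hz h
    have h0 : f (E 5) (x, y) ≤ 0 := hz.2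
    rw [f_E5] at h0
    simp only at h
    subst h
    nlinarith [sq_nonneg (x ^ 2 - 1)]
  refine ⟨![(1, 1), (1, -1), (-1, 1), (-1, -1)], ?_, pairwise_not_J ?_⟩
  · intro i
    fin_cases i <;> refine mem_X (by norm_num) (by norm_num) ?_ <;> rw [f_E5] <;> norm_num
  · have hX : ∀ u v : ℝ, ¬ Fam.J (E 5) (1, u) (-1, v) := fun u v =>
      not_J_of_sign (φ := fun z => z.1) (by fun_prop) hx (by norm_num) (by norm_num)
    have hY : ∀ u v : ℝ, ¬ Fam.J (E 5) (u, 1) (v, -1) := fun u v =>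
      not_J_of_sign (φ := fun z => z.2) (by fun_prop) hy (by norm_num) (by norm_num)
    intro i j hij
    fin_cases i <;> fin_cases j <;>
      first | exact hX _ _ | exact hY _ _ | exact absurd hij (by decide)

/-- In the convex example a linear functional separates the disc of each quadrant from the other
three discs. -/
lemma inv_E5' : ¬ inv 6 (E 5) := by
  rintro ⟨p, ⟨hp, hp'⟩, h1, h2, h3⟩
  have bound : ∀ i, (1 / 4 ≤ (p i).1 ^ 2 ∧ (p i).1 ^ 2 ≤ 7 / 4 ∧ 1 / 4 ≤ (p i).2 ^ 2 ∧
      (p i).2 ^ 2 ≤ 7 / 4) := by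
    intro i
    have h0 : f (E 5) ((p i).1, (p i).2) ≤ 0 := (hp i).2
    rw [f_E5] at h0
    refine ⟨?_, ?_, ?_, ?_⟩ <;>
      nlinarith [sq_nonneg ((p i).1 ^ 2 - 1), sq_nonneg ((p i).2 ^ 2 - 1)]
  have bound' : ∀ t : ℝ, 1 / 4 ≤ t ^ 2 → t ^ 2 ≤ 7 / 4 → 0 ≤ t → 1 / 2 ≤ t ∧ t ≤ 4 / 3 := by
    intro t ha hb hc
    constructor <;> nlinarith
  obtain ⟨σ, hσ, hσ2, hx⟩ := exists_sign (p 3).1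
  obtain ⟨τ, hτ, hτ2, hy⟩ := exists_sign (p 3).2
  have sep : ∀ i, i ≠ 3 → σ * (p i).1 + τ * (p i).2 < σ * (p 3).1 + τ * (p 3).2 := by
    intro i hi
    obtain ⟨b1, b2, b3, b4⟩ := bound i
    obtain ⟨c1, c2, c3, c4⟩ := bound 3
    have sq : ∀ t u : ℝ, t ^ 2 = 1 → (t * u) ^ 2 = u ^ 2 := fun t u ht => by
      rw [mul_pow, ht, one_mul]
    have d1 := (bound' (σ * (p 3).1) (by rwa [sq _ _ hσ2]) (by rwa [sq _ _ hσ2]) hx).1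
    have d2 := (bound' (τ * (p 3).2) (by rwa [sq _ _ hτ2]) (by rwa [sq _ _ hτ2]) hy).1
    rw [← sq σ _ hσ2] at b1 b2
    rw [← sq τ _ hτ2] at b3 b4
    rcases le_or_gt 0 (σ * (p i).1) with hu | hu
    · rcases le_or_gt 0 (τ * (p i).2) with hv | hv
      · exact absurd ((J_well f_E5 (hp i) hσ2 hu hτ2 hv).trans
          (J_well f_E5 (hp 3) hσ2 hx hτ2 hy).symm) (hp' i 3 hi)
      · have a1 := (bound' _ b1 b2 hu).2
        have a2 := (bound' (-(τ * (p i).2)) (by rwa [neg_sq]) (by rwa [neg_sq]) (by linarith)).1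
        linarith
    · have a1 := (bound' (-(σ * (p i).1)) (by rwa [neg_sq]) (by rwa [neg_sq]) (by linarith)).1
      have a2 : τ * (p i).2 ≤ 4 / 3 := by nlinarith
      linarith
  have s0 := sep 0 (by decide)
  have s1 := sep 1 (by decide)
  have s2 := sep 2 (by decide)
  -- `p 3` is a positive combination of the other points, with the three areas as weights.
  have e1 : (o (p 0) (p 1) (p 3) + o (p 1) (p 2) (p 3) + o (p 2) (p 0) (p 3)) * (p 3).1
      = o (p 0) (p 1) (p 3) * (p 2).1 + o (p 1) (p 2) (p 3) * (p 0).1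
        + o (p 2) (p 0) (p 3) * (p 1).1 := by
    simp only [o]
    ring
  have e2 : (o (p 0) (p 1) (p 3) + o (p 1) (p 2) (p 3) + o (p 2) (p 0) (p 3)) * (p 3).2
      = o (p 0) (p 1) (p 3) * (p 2).2 + o (p 1) (p 2) (p 3) * (p 0).2
        + o (p 2) (p 0) (p 3) * (p 1).2 := by
    simp only [o]
    ring
  have t0 := mul_lt_mul_of_pos_left s2 h1
  have t1 := mul_lt_mul_of_pos_left s0 h2
  have t2 := mul_lt_mul_of_pos_left s1 h3
  have e3 : (o (p 0) (p 1) (p 3) + o (p 1) (p 2) (p 3) + o (p 2) (p 0) (p 3))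
      * (σ * (p 3).1 + τ * (p 3).2)
      = o (p 0) (p 1) (p 3) * (σ * (p 2).1 + τ * (p 2).2)
        + o (p 1) (p 2) (p 3) * (σ * (p 0).1 + τ * (p 0).2)
        + o (p 2) (p 0) (p 3) * (σ * (p 1).1 + τ * (p 1).2) := by
    linear_combination σ * e1 + τ * e2
  linarith

lemma inv_E6 : inv 6 (E 6) := by
  have hX0 : ∀ z ∈ Fam.X (E 6), z.1 ≠ 0 := by
    rintro ⟨x, y⟩ hz h
    have h0 : f (E 6) (x, y) ≤ 0 := hz.2
    rw [f_E6] at h0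
    simp only at h
    subst h
    nlinarith [sq_nonneg (y ^ 2), sq_nonneg y]
  have hX1 : ∀ z ∈ Fam.X (E 6), z.1 + 3 / 4 ≠ 0 := by
    rintro ⟨x, y⟩ hz h
    have h0 : f (E 6) (x, y) ≤ 0 := hz.2
    rw [f_E6] at h0
    simp only at h
    have : x = -3 / 4 := by linarith
    subst this
    nlinarith [sq_nonneg (y ^ 2 - 1 / 4), sq_nonneg y]
  have hY : ∀ z ∈ Fam.X (E 6), z.1 < -3 / 4 → z.2 ≠ 0 := by
    rintro ⟨x, y⟩ hz hx h
    have h0 : f (E 6) (x, y) ≤ 0 := hz.2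
    rw [f_E6] at h0
    simp only at h hx
    subst h
    have : 5 / 16 < x ^ 2 - 1 / 4 := by nlinarith
    nlinarith
  refine ⟨![(1 / 2, 0), (-1, 7 / 8), (-1, -7 / 8), (-1 / 2, 0)], ⟨?_, pairwise_not_J ?_⟩, ?_⟩
  · intro i
    fin_cases i <;> refine mem_X ?_ ?_ ?_ <;> first | rw [f_E6]; norm_num | norm_num [abs_le]
  · have k0 : ∀ u v : ℝ, u < 0 → ¬ Fam.J (E 6) (1 / 2, 0) (u, v) := fun u v hu =>
      not_J_of_sign (φ := fun z => z.1) (by fun_prop) hX0 (by norm_num) hu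
    have k3 : ∀ v : ℝ, ¬ Fam.J (E 6) (-1, v) (-1 / 2, 0) := fun v hJ =>
      not_J_of_sign (φ := fun z => z.1 + 3 / 4) (by fun_prop) hX1 (by norm_num) (by norm_num)
        hJ.symm
    have k12 : ¬ Fam.J (E 6) (-1, 7 / 8) (-1, -7 / 8) := by
      rintro ⟨T, hTX, hT, h1, h2⟩
      have hneg : ∀ z ∈ T, 0 < -(z.1 + 3 / 4) := fun z hz =>
        sign_const hT (φ := fun z => -(z.1 + 3 / 4)) (by fun_prop)
          (fun w hw => neg_ne_zero.2 (hX1 w (hTX hw))) h1 hz (by norm_num)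
      have := sign_const hT (φ := fun z => z.2) (by fun_prop)
        (fun w hw => hY w (hTX hw) (by linarith [hneg w hw])) h1 h2 (by norm_num)
      norm_num at this
    intro i j hij
    fin_cases i <;> fin_cases j <;>
      first
      | exact absurd hij (by decide)
      | exact k12
      | exact k3 _
      | exact k0 _ _ (by norm_num)
  · refine ⟨?_, ?_, ?_⟩ <;> simp [o] <;> norm_num

lemma inv_E (j : Fin 7) : inv j (E j) := by
  match j with
  | 0 => trivial
  | 1 => exact inv_E1
  | 2 => exact inv_E2
  | 3 => exact inv_E3
  | 4 => exact inv_E4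
  | 5 => exact inv_E5
  | 6 => exact inv_E6

lemma not_inv_E (i j : Fin 7) (hij : i < j) : ¬ inv j (E i) := by
  intro h
  have h' : inv (i + 1) (E i) := inv_anti (Nat.succ_le_of_lt hij) h
  match i with
  | 0 => exact inv_E0 h'
  | 1 => exact inv_E1' h'
  | 2 => exact inv_E2' h'
  | 3 => exact inv_E3' h'
  | 4 => exact inv_E4' h'
  | 5 => exact inv_E5' h'
  | 6 => exact absurd hij (by have := j.isLt; simp only [Fin.lt_def]; norm_num; omega)

/-! ### Shrinking the examples into a small ball -/

/-- The quasihomogeneous action of `r` on the parameters, which makes `f` homogeneous of degree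
four under `p ↦ r • p`. -/
noncomputable def sc (r : ℝ) (l : Par) : Par :=
  !₂[r ^ 4 * l 0, r ^ 3 * l 1, r ^ 3 * l 2, r ^ 2 * l 3, r ^ 2 * l 4, r ^ 2 * l 5, r * l 6, r * l 7,
    l 8]

lemma f_sc (r : ℝ) (l : Par) (p : ℝ × ℝ) : f (sc r l) (r • p) = r ^ 4 * f l p := by
  simp [f, sc]
  ring

lemma fx_sc (r : ℝ) (l : Par) (p : ℝ × ℝ) : fx (sc r l) (r • p) = r ^ 3 * fx l p := by
  simp [fx, sc]
  ring

lemma fy_sc (r : ℝ) (l : Par) (p : ℝ × ℝ) : fy (sc r l) (r • p) = r ^ 3 * fy l p := by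
  simp [fy, sc]
  ring

lemma sc_one (l : Par) : sc 1 l = l := by
  ext i
  fin_cases i <;> simp [sc]

lemma sc_cont (l : Par) : Continuous fun r => sc r l := by
  unfold sc
  refine (PiLp.continuous_toLp 2 _).comp (continuous_pi fun i => ?_)
  fin_cases i <;> simp <;> fun_prop

lemma sc_mem_S {l : Par} (hl : l ∈ S) {r : ℝ} (h0 : 0 < r) (h1 : r ≤ 1) : sc r l ∈ S := by
  have hk : ∀ (i : Fin 9) (k : ℕ), |r ^ k * l i| < 5 := by
    intro i k
    rw [abs_mul, abs_of_pos (by positivity)]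
    have : r ^ k ≤ 1 := pow_le_one₀ h0.le h1
    nlinarith [hl.1 i, abs_nonneg (l i)]
  refine ⟨fun i => ?_, by simpa [sc] using hl.2.1, fun p hp h => ?_⟩
  · have h6 := hk 6 1
    have h7 := hk 7 1
    have h8 := hk 8 0
    rw [pow_one] at h6 h7
    rw [pow_zero, one_mul] at h8
    fin_cases i
    · exact hk 0 4
    · exact hk 1 3
    · exact hk 2 3
    · exact hk 3 2
    · exact hk 4 2
    · exact hk 5 2
    · exact h6
    · exact h7
    · exact h8
  · obtain ⟨q, rfl⟩ : ∃ q, p = r • q := ⟨r⁻¹ • p, by rw [smul_smul, mul_inv_cancel₀ h0.ne', one_smul]⟩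
    have hr : ∀ k, r ^ k ≠ 0 := fun k => pow_ne_zero k h0.ne'
    have hx : fx (sc r l) (r • q) = 0 := congrArg Prod.fst h
    have hy : fy (sc r l) (r • q) = 0 := congrArg Prod.snd h
    rw [f_sc] at hp
    rw [fx_sc] at hx
    rw [fy_sc] at hy
    exact hl.2.2 q ((mul_eq_zero.1 hp).resolve_left (hr 4))
      (Prod.ext ((mul_eq_zero.1 hx).resolve_left (hr 3)) ((mul_eq_zero.1 hy).resolve_left (hr 3)))

lemma inv_sc {l : Par} (hl : l ∈ S) {r : ℝ} (h0 : 0 < r) (h1 : r ≤ 1) (k : ℕ) :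
    inv k (sc r l) ↔ inv k l := by
  have hT : IsPreconnected ((fun r => sc r l) '' Icc r 1) :=
    isPreconnected_Icc.image _ (sc_cont l).continuousOn
  refine inv_const k hT ?_ ⟨r, left_mem_Icc.2 h1, rfl⟩ ⟨1, right_mem_Icc.2 h1, sc_one l⟩
  rintro _ ⟨t, ht, rfl⟩
  exact sc_mem_S hl (h0.trans_le ht.1) ht.2

lemma tendsto_sc (j : Fin 7) : Tendsto (fun r => sc r (E j)) (𝓝 0) (𝓝 0) := by
  have h : sc 0 (E j) = 0 := by
    ext i
    fin_cases j <;> fin_cases i <;> simp [sc, E]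
  simpa [h] using (sc_cont (E j)).tendsto 0

lemma exists_scale {δ : ℝ} (hδ : 0 < δ) :
    ∃ r : ℝ, 0 < r ∧ r ≤ 1 ∧ ∀ j, ‖sc r (E j)‖ < δ := by
  have hev : ∀ᶠ r in 𝓝 (0 : ℝ), ∀ j, ‖sc r (E j)‖ < δ := by
    refine eventually_all.2 fun j => ?_
    have := (tendsto_sc j).norm
    rw [norm_zero] at this
    exact this.eventually_lt_const hδ
  have hev' : ∀ᶠ r in 𝓝[>] (0 : ℝ), ∀ j, ‖sc r (E j)‖ < δ := nhdsWithin_le_nhds hev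
  obtain ⟨r, h, hr⟩ := (hev'.and (Ioc_mem_nhdsGT one_pos)).exists
  exact ⟨r, hr.1, hr.2, h⟩

/-! ### The local discriminant -/

lemma hasFDerivAt_def (l : Par) (p : EuclideanSpace ℝ (Fin 2)) :
    HasFDerivAt (fun q => X9plusDef q l)
      (fx l (p 0, p 1) • EuclideanSpace.proj (𝕜 := ℝ) (0 : Fin 2)
        + fy l (p 0, p 1) • EuclideanSpace.proj (𝕜 := ℝ) (1 : Fin 2)) p := by
  have hx : HasFDerivAt (fun q : EuclideanSpace ℝ (Fin 2) => q 0)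
      (EuclideanSpace.proj (𝕜 := ℝ) (0 : Fin 2) : EuclideanSpace ℝ (Fin 2) →L[ℝ] ℝ) p :=
    (EuclideanSpace.proj (𝕜 := ℝ) (0 : Fin 2)).hasFDerivAt
  have hy : HasFDerivAt (fun q : EuclideanSpace ℝ (Fin 2) => q 1)
      (EuclideanSpace.proj (𝕜 := ℝ) (1 : Fin 2) : EuclideanSpace ℝ (Fin 2) →L[ℝ] ℝ) p :=
    (EuclideanSpace.proj (𝕜 := ℝ) (1 : Fin 2)).hasFDerivAt
  have := ((((((((((hx.pow 4).add (hy.pow 4)).add_const (l 0)).add (hx.const_mul (l 1))).add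
    (hy.const_mul (l 2))).add ((hx.pow 2).const_mul (l 3))).add
    ((hx.mul hy).const_mul (l 4))).add ((hy.pow 2).const_mul (l 5))).add
    (((hx.pow 2).mul hy).const_mul (l 6))).add ((hx.mul (hy.pow 2)).const_mul (l 7))).add
    (((hx.pow 2).mul (hy.pow 2)).const_mul (l 8))
  refine this.congr_fderiv ?_
  ext v
  simp [fx, fy]
  ring

lemma fderiv_eq_zero_iff (l : Par) (p : EuclideanSpace ℝ (Fin 2)) :
    fderiv ℝ (fun q => X9plusDef q l) p = 0 ↔ (fx l (p 0, p 1), fy l (p 0, p 1)) = 0 := by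
  rw [(hasFDerivAt_def l p).fderiv]
  constructor
  · intro h
    have h0 := DFunLike.congr_fun h !₂[1, 0]
    have h1 := DFunLike.congr_fun h !₂[0, 1]
    simp at h0 h1
    exact Prod.ext h0 h1
  · intro h
    have h0 : fx l (p 0, p 1) = 0 := congrArg Prod.fst h
    have h1 : fy l (p 0, p 1) = 0 := congrArg Prod.snd h
    rw [h0, h1]
    simp

lemma norm_le_two_max (p : EuclideanSpace ℝ (Fin 2)) : ‖p‖ ≤ 2 * max |p 0| |p 1| := by
  rw [EuclideanSpace.norm_eq, Fin.sum_univ_two]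
  have h0 := le_max_left |p 0| |p 1|
  have h1 := le_max_right |p 0| |p 1|
  have hm : 0 ≤ max |p 0| |p 1| := (abs_nonneg _).trans h0
  refine Real.sqrt_le_iff.2 ⟨by positivity, ?_⟩
  simp only [Real.norm_eq_abs]
  nlinarith [abs_nonneg (p 0), abs_nonneg (p 1)]

/-- For small parameters all zeros of `f` are close to the origin. -/
lemma norm_le_of_zero {ε : ℝ} (h0 : 0 < ε) (h1 : ε ≤ 1) {l : Par} (hl : ‖l‖ < ε ^ 4 / 200)
    {p : EuclideanSpace ℝ (Fin 2)} (hp : f l (p 0, p 1) = 0) : ‖p‖ ≤ ε := by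
  by_contra! hlt
  have hm : ε / 2 < max |p 0| |p 1| := by linarith [norm_le_two_max p]
  have hli : ∀ i, |l i| ≤ ε ^ 4 / 200 := fun i => by
    have := PiLp.norm_apply_le l i
    rw [Real.norm_eq_abs] at this
    linarith
  have h := f_lower (l := l) hli (hli 8) (le_max_left |p 0| |p 1|) (le_max_right |p 0| |p 1|)
  rw [hp] at h
  have h2 := max_pow_le (p 0) (p 1)
  set m := max |p 0| |p 1|
  have hm0 : 0 < m := by linarith
  have hε4 : ε ^ 4 ≤ 1 := pow_le_one₀ h0.le h1
  have hm4 : ε ^ 4 / 16 < m ^ 4 := by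
    have := pow_lt_pow_left₀ hm (by positivity) (n := 4) (by norm_num)
    linarith [show (ε / 2) ^ 4 = ε ^ 4 / 16 by ring]
  have hε0 : 0 < ε ^ 4 := by positivity
  have h3 : (1 - ε ^ 4 / 200 / 2) * m ^ 4 ≤ (1 - ε ^ 4 / 200 / 2) * (p 0 ^ 4 + p 1 ^ 4) :=
    mul_le_mul_of_nonneg_left h2 (by linarith)
  rcases le_total m 1 with h4 | h4
  · have h5 : 1 + 2 * m + 3 * m ^ 2 + 2 * m ^ 3 ≤ 8 := by
      have : m ^ 2 ≤ 1 := pow_le_one₀ hm0.le h4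
      have : m ^ 3 ≤ 1 := pow_le_one₀ hm0.le h4
      linarith
    nlinarith
  · have h5 : 1 + 2 * m + 3 * m ^ 2 + 2 * m ^ 3 ≤ 8 * m ^ 4 := by
      have a1 : m ^ 1 ≤ m ^ 4 := pow_le_pow_right₀ h4 (by norm_num)
      have a2 : m ^ 2 ≤ m ^ 4 := pow_le_pow_right₀ h4 (by norm_num)
      have a3 : m ^ 3 ≤ m ^ 4 := pow_le_pow_right₀ h4 (by norm_num)
      have a0 : m ^ 0 ≤ m ^ 4 := pow_le_pow_right₀ h4 (by norm_num)
      simp only [pow_one, pow_zero] at a0 a1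
      linarith
    have hm5 : 0 < m ^ 4 := by positivity
    nlinarith

/-- For small parameters a critical point with value `0` is automatically close to the origin, so
outside the local discriminant the whole zero level is nonsingular. -/
lemma compl_disc_subset {ε : ℝ} (h0 : 0 < ε) (h1 : ε ≤ 1) :
    {l : Par | ‖l‖ < ε ^ 4 / 200} \ X9plusDisc ε (ε ^ 4 / 200) ⊆ S := by
  rintro l ⟨hl, hd⟩
  have hl' : ‖l‖ < ε ^ 4 / 200 := hl
  have hε4 : ε ^ 4 ≤ 1 := pow_le_one₀ h0.le h1
  have hli : ∀ i, |l i| < 1 := fun i => by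
    have := PiLp.norm_apply_le l i
    rw [Real.norm_eq_abs] at this
    linarith
  refine ⟨fun i => (hli i).trans (by norm_num), hli 8, ?_⟩
  rintro ⟨x, y⟩ hp h
  refine hd ⟨hl, !₂[x, y], norm_le_of_zero h0 h1 hl' (by simpa using hp), ?_, ?_⟩
  · simpa [X9plusDef, f] using hp
  · rw [fderiv_eq_zero_iff]
    simpa using h

end X9

/-- The complement of the local discriminant of the `+X₉` singularity has at least 7
connected components. -/
theorem X9plus_discriminant_complement_components :
    ∃ ε₀ : ℝ, 0 < ε₀ ∧ ∀ ε : ℝ, 0 < ε → ε ≤ ε₀ → ∃ δ : ℝ, 0 < δ ∧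
      ∃ pts : Fin 7 → EuclideanSpace ℝ (Fin 9),
        (∀ i, pts i ∈ ({l : EuclideanSpace ℝ (Fin 9) | ‖l‖ < δ} \ X9plusDisc ε δ)) ∧
        Function.Injective (fun i =>
          connectedComponentIn ({l : EuclideanSpace ℝ (Fin 9) | ‖l‖ < δ} \ X9plusDisc ε δ)
            (pts i)) := by
  refine ⟨1, one_pos, fun ε h0 h1 => ⟨ε ^ 4 / 200, by positivity, ?_⟩⟩
  -- A common scaling factor `r` brings all examples into the ball.
  obtain ⟨r, hr0, hr1, hr⟩ := X9.exists_scale (δ := ε ^ 4 / 200) (by positivity)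
  have hmem : ∀ i, X9.sc r (X9.E i) ∈
      ({l : EuclideanSpace ℝ (Fin 9) | ‖l‖ < ε ^ 4 / 200} \ X9plusDisc ε (ε ^ 4 / 200)) := by
    intro i
    refine ⟨hr i, ?_⟩
    rintro ⟨-, p, -, hp, hd⟩
    refine (X9.sc_mem_S (X9.E_mem_S i) hr0 hr1).2.2 (p 0, p 1) ?_
      ((X9.fderiv_eq_zero_iff _ p).1 hd)
    simpa [X9plusDef, X9.f] using hp
  refine ⟨fun i => X9.sc r (X9.E i), hmem, ?_⟩
  have key : ∀ i j : Fin 7, i < j → connectedComponentIn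
      ({l : EuclideanSpace ℝ (Fin 9) | ‖l‖ < ε ^ 4 / 200} \ X9plusDisc ε (ε ^ 4 / 200))
        (X9.sc r (X9.E i)) ≠ connectedComponentIn
      ({l : EuclideanSpace ℝ (Fin 9) | ‖l‖ < ε ^ 4 / 200} \ X9plusDisc ε (ε ^ 4 / 200))
        (X9.sc r (X9.E j)) := by
    intro i j hij heq
    have h2 := mem_connectedComponentIn (hmem j)
    rw [← heq] at h2
    have := (X9.inv_const j isPreconnected_connectedComponentIn
      ((connectedComponentIn_subset _ _).trans (X9.compl_disc_subset h0 h1))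
      (mem_connectedComponentIn (hmem i)) h2).2
      ((X9.inv_sc (X9.E_mem_S j) hr0 hr1 j).2 (X9.inv_E j))
    exact X9.not_inv_E i j hij ((X9.inv_sc (X9.E_mem_S i) hr0 hr1 j).1 this)
  intro i j hij
  rcases lt_trichotomy i j with h | h | h
  · exact absurd hij (key i j h)
  · exact h
  · exact absurd hij.symm (key j i h)
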